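/- Let G be a 3-connected graph that is {K33+, K33h}-free, and let {G1, G2} be a 3-separation of G. If G1^Y is nonplanar, then G2^Δ is a wheel. -/

import Mathlib

open SimpleGraph

/-- `H` is a minor of `G` (branch-set / model definition). -/
def IsMinor {W V : Type*} (H : SimpleGraph W) (G : SimpleGraph V) : Prop :=
  ∃ B : W → Set V,
    (∀ w, (B w).Nonempty) ∧
    (∀ w, (G.induce (B w)).Connected) ∧
    (Pairwise fun w₁ w₂ => Disjoint (B w₁) (B w₂)) ∧
    (∀ ⦃w₁ w₂ : W⦄, H.Adj w₁ w₂ → ∃ v₁ ∈ B w₁, ∃ v₂ ∈ B w₂, G.Adj v₁ v₂)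

def K5 : SimpleGraph (Fin 5) := ⊤

def K33 : SimpleGraph (Fin 3 ⊕ Fin 3) := completeBipartiteGraph (Fin 3) (Fin 3)

/-- A graph is planar iff it has neither a `K₅` nor a `K₃,₃` minor (Wagner's theorem). -/
def Planar {V : Type*} (G : SimpleGraph V) : Prop := ¬ IsMinor K5 G ∧ ¬ IsMinor K33 G

/-- `G / uw`: contract the edge `uw`, merging `w` into `u` (the vertex `w` becomes isolated). -/
def contractEdge {V : Type*} (G : SimpleGraph V) (u w : V) : SimpleGraph V :=
  SimpleGraph.fromRel fun a b =>
    a ≠ w ∧ b ≠ w ∧ (G.Adj a b ∨ (a = u ∧ G.Adj w b) ∨ (b = u ∧ G.Adj a w))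

/-- A nonplanar graph is almost-planar if for every edge, deletion or contraction is planar. -/
def AlmostPlanar {V : Type*} (G : SimpleGraph V) : Prop :=
  ¬ Planar G ∧ ∀ ⦃u v : V⦄, G.Adj u v →
    (Planar (G.deleteEdges {s(u, v)}) ∨ Planar (contractEdge G u v))

/-- `G` is `k`-connected: more than `k` vertices and deleting fewer than `k` vertices
leaves a connected graph. -/
def KConnected {V : Type*} (G : SimpleGraph V) (k : ℕ) : Prop :=
  k < Nat.card V ∧ ∀ s : Set V, s.ncard < k → (G.induce (sᶜ)).Connected

/-- `{G[A], G[B]}` is a `k`-separation of `G`. -/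
def IsSep {V : Type*} (G : SimpleGraph V) (k : ℕ) (A B : Set V) : Prop :=
  A ∪ B = Set.univ ∧ A ≠ Set.univ ∧ B ≠ Set.univ ∧ (A ∩ B).ncard = k ∧
  ∀ ⦃x y : V⦄, G.Adj x y → (x ∈ A ∧ y ∈ A) ∨ (x ∈ B ∧ y ∈ B)

/-- The star `K_{1,3}`, with centre `0`. -/
def K13 : SimpleGraph (Fin 4) := SimpleGraph.fromRel fun a _ => a = 0

def InternallyFourConnected {V : Type*} (G : SimpleGraph V) : Prop :=
  KConnected G 3 ∧ 5 ≤ Nat.card V ∧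
  ∀ A B : Set V, IsSep G 3 A B →
    Xor' (Nonempty (G.induce A ≃g K13)) (Nonempty (G.induce B ≃g K13))

/-- The wheel `W_n`: a cycle of length `n` plus a hub (`none`) joined to all of it. -/
def wheelGraph (n : ℕ) : SimpleGraph (Option (Fin n)) :=
  SimpleGraph.fromRel fun a b =>
    match a, b with
    | some i, some j => j.val = (i.val + 1) % n
    | none, some _ => True
    | _, _ => False

def IsWheel {V : Type*} (G : SimpleGraph V) : Prop :=
  ∃ n, 3 ≤ n ∧ Nonempty (G ≃g wheelGraph n)

/-- The double wheel `DW_n`: a cycle of length `n` plus two adjacent hubs joined to all of it. -/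
def doubleWheel (n : ℕ) : SimpleGraph (Fin n ⊕ Fin 2) :=
  SimpleGraph.fromRel fun a b =>
    match a, b with
    | .inl i, .inl j => j.val = (i.val + 1) % n
    | .inl _, .inr _ => True
    | .inr _, .inr _ => True
    | _, _ => False

/-- The Möbius ladder `M_n`: a cycle of length `2n` plus all "opposite" chords. -/
def mobiusLadder (n : ℕ) : SimpleGraph (Fin (2 * n)) :=
  SimpleGraph.fromRel fun i j =>
    j.val = (i.val + 1) % (2 * n) ∨ j.val = (i.val + n) % (2 * n)

/-- `C²_m`: a cycle of length `m` plus all chords between vertices at distance two. -/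
def squareCycle (m : ℕ) : SimpleGraph (Fin m) :=
  SimpleGraph.fromRel fun i j =>
    j.val = (i.val + 1) % m ∨ j.val = (i.val + 2) % m

/-- The alternating double wheel `AW_{2n}`: a cycle of length `2n` plus two adjacent hubs,
each joined to alternating cycle vertices. -/
def altDoubleWheel (n : ℕ) : SimpleGraph (Fin (2 * n) ⊕ Fin 2) :=
  SimpleGraph.fromRel fun a b =>
    match a, b with
    | .inl i, .inl j => j.val = (i.val + 1) % (2 * n)
    | .inl i, .inr k => i.val % 2 = k.val
    | .inr _, .inr _ => True
    | _, _ => False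

/-- The class `𝒲`: three wheels glued along a common triangle `V₀`, with no other edges. -/
def InClassW {V : Type*} (G : SimpleGraph V) : Prop :=
  ∃ P : V → Fin 4,
    (P ⁻¹' {0}).ncard = 3 ∧
    (∀ x y : V, P x = 0 → P y = 0 → x ≠ y → G.Adj x y) ∧
    (∀ i : Fin 4, i ≠ 0 → IsWheel (G.induce {v | P v = 0 ∨ P v = i})) ∧
    (∀ ⦃x y : V⦄, G.Adj x y → ∃ i : Fin 4, i ≠ 0 ∧ (P x = 0 ∨ P x = i) ∧ (P y = 0 ∨ P y = i))

/-- `EX₁`: `K₃,₃` plus a vertex joined to all of one colour class. -/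
def EX1 : SimpleGraph (Option (Fin 3 ⊕ Fin 3)) :=
  SimpleGraph.fromRel fun a b =>
    match a, b with
    | some (.inl _), some (.inr _) => True
    | none, some (.inl _) => True
    | _, _ => False

/-- `EX₂`: `K₅` plus a vertex joined to three of its vertices. -/
def EX2 : SimpleGraph (Option (Fin 5)) :=
  SimpleGraph.fromRel fun a b =>
    match a, b with
    | some i, some j => i ≠ j
    | none, some j => j.val < 3
    | _, _ => False

/-- `EX₈`: `K₃,₃` plus a vertex joined to two vertices of one class and one of the other. -/
def EX8 : SimpleGraph (Option (Fin 3 ⊕ Fin 3)) :=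
  SimpleGraph.fromRel fun a b =>
    match a, b with
    | some (.inl _), some (.inr _) => True
    | none, some x => x = Sum.inl 0 ∨ x = Sum.inl 1 ∨ x = Sum.inr 0
    | _, _ => False

/-- `K₅ʰ`: subdivide the edges `01` and `02` of `K₅` and join the two subdivision vertices. -/
def K5h : SimpleGraph (Fin 5 ⊕ Fin 2) :=
  SimpleGraph.fromRel fun a b =>
    match a, b with
    | .inl i, .inl j =>
        i ≠ j ∧ ¬(i = 0 ∧ j = 1) ∧ ¬(i = 1 ∧ j = 0) ∧ ¬(i = 0 ∧ j = 2) ∧ ¬(i = 2 ∧ j = 0)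
    | .inl i, .inr k => (k = 0 ∧ (i = 0 ∨ i = 1)) ∨ (k = 1 ∧ (i = 0 ∨ i = 2))
    | .inr _, .inr _ => True
    | _, _ => False

/-- `K₃,₃ʰ`: subdivide two edges of `K₃,₃` at a common endpoint and join
the two subdivision vertices. -/
def K33h : SimpleGraph ((Fin 3 ⊕ Fin 3) ⊕ Fin 2) :=
  SimpleGraph.fromRel fun a b =>
    match a, b with
    | .inl (.inl i), .inl (.inr j) => ¬(i = 0 ∧ (j = 0 ∨ j = 1))
    | .inl (.inr j), .inl (.inl i) => ¬(i = 0 ∧ (j = 0 ∨ j = 1))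
    | .inl x, .inr k =>
        (k = 0 ∧ (x = Sum.inl 0 ∨ x = Sum.inr 0)) ∨ (k = 1 ∧ (x = Sum.inl 0 ∨ x = Sum.inr 1))
    | .inr _, .inr _ => True
    | _, _ => False

/-- `K₅⁺`: `K₅` plus a pendant vertex. -/
def K5plus : SimpleGraph (Option (Fin 5)) :=
  SimpleGraph.fromRel fun a b =>
    match a, b with
    | some i, some j => i ≠ j
    | none, some j => j = 0
    | _, _ => False

/-- `K₃,₃⁺`: `K₃,₃` plus a pendant vertex. -/
def K33plus : SimpleGraph (Option (Fin 3 ⊕ Fin 3)) :=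
  SimpleGraph.fromRel fun a b =>
    match a, b with
    | some (.inl _), some (.inr _) => True
    | none, some x => x = Sum.inl 0
    | _, _ => False

/-- `K₅ ⊕ e`: disjoint union of `K₅` and one edge. -/
def K5oplus : SimpleGraph (Fin 5 ⊕ Fin 2) :=
  SimpleGraph.fromRel fun a b =>
    match a, b with
    | .inl i, .inl j => i ≠ j
    | .inr _, .inr _ => True
    | _, _ => False

/-- `K₃,₃ ⊕ e`: disjoint union of `K₃,₃` and one edge. -/
def K33oplus : SimpleGraph ((Fin 3 ⊕ Fin 3) ⊕ Fin 2) :=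
  SimpleGraph.fromRel fun a b =>
    match a, b with
    | .inl (.inl _), .inl (.inr _) => True
    | .inr _, .inr _ => True
    | _, _ => False

/-- The triad addition of `H` at `x y z`: add a new vertex joined to `x`, `y`, `z`. -/
def triadAddition {U : Type*} (H : SimpleGraph U) (x y z : U) : SimpleGraph (Option U) :=
  SimpleGraph.fromRel fun a b =>
    match a, b with
    | some u, some v => H.Adj u v
    | none, some u => u = x ∨ u = y ∨ u = z
    | _, _ => False

def IsTriadAdditionOf {V U : Type*} (G : SimpleGraph V) (H : SimpleGraph U) : Prop :=
  ∃ x y z : U, x ≠ y ∧ y ≠ z ∧ x ≠ z ∧ Nonempty (G ≃g triadAddition H x y z)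

/-- `G` is obtained from `H` by subdividing (possibly repeatedly) edges of `H`,
all of which lie in `S`. -/
def IsSubdivisionWithin {V W : Type*} (G : SimpleGraph V) (H : SimpleGraph W)
    (S : Set (Sym2 W)) : Prop :=
  ∃ (f : W ↪ V) (p : ∀ ⦃u v : W⦄, H.Adj u v → G.Walk (f u) (f v)),
    (∀ ⦃u v : W⦄ (h : H.Adj u v), (p h).IsPath) ∧
    (∀ ⦃u v : W⦄ (h : H.Adj u v), p h.symm = (p h).reverse) ∧
    (∀ ⦃u v : W⦄ (h : H.Adj u v), s(u, v) ∉ S → (p h).length = 1) ∧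
    (∀ ⦃u v : W⦄ (h : H.Adj u v) (w : W), f w ∈ (p h).support → w = u ∨ w = v) ∧
    (∀ ⦃u v u' v' : W⦄ (h : H.Adj u v) (h' : H.Adj u' v'), s(u, v) ≠ s(u', v') →
      ∀ x : V, x ∈ (p h).support → x ∈ (p h').support → x ∈ Set.range f) ∧
    (∀ x : V, x ∈ Set.range f ∨ ∃ (u v : W) (h : H.Adj u v), x ∈ (p h).support) ∧
    (∀ e ∈ G.edgeSet, ∃ (u v : W) (h : H.Adj u v), e ∈ (p h).edges)

/-- `G` is a subdivision of `H`. -/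
def IsSubdivision {V W : Type*} (G : SimpleGraph V) (H : SimpleGraph W) : Prop :=
  IsSubdivisionWithin G H Set.univ

/-- `D(H)`: the set of edges of `H` whose deletion leaves a planar graph. -/
def Dset {U : Type*} (H : SimpleGraph U) : Set (Sym2 U) :=
  {e | e ∈ H.edgeSet ∧ Planar (H.deleteEdges {e})}

/-- `G[A]` together with all edges between vertices of `T` (`T ⊆ A` intended). -/
def deltaGraph {V : Type*} (G : SimpleGraph V) (A T : Set V) : SimpleGraph A :=
  SimpleGraph.fromRel fun a b => G.Adj a.1 b.1 ∨ (a.1 ∈ T ∧ b.1 ∈ T)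

/-- `G[A]^Y` for the separation `{G[A], G[B]}`: add a new vertex joined to `A ∩ B`. -/
def sepY {V : Type*} (G : SimpleGraph V) (A B : Set V) : SimpleGraph (Option A) :=
  SimpleGraph.fromRel fun x y =>
    match x, y with
    | some a, some b => G.Adj a.1 b.1
    | none, some a => a.1 ∈ A ∩ B
    | _, _ => False

/-- `G₂` is obtained from `G` by adding isolated vertices. -/
def AddIsolated {V₂ V : Type*} (G₂ : SimpleGraph V₂) (G : SimpleGraph V) : Prop :=
  ∃ f : V ↪ V₂, (∀ a b : V, G₂.Adj (f a) (f b) ↔ G.Adj a b) ∧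
    ∀ x : V₂, x ∉ Set.range f → ∀ y : V₂, ¬ G₂.Adj x y

/-- The set of non-isolated vertices of `G` (so `G* = G.induce (core G)`). -/
def core {V : Type*} (G : SimpleGraph V) : Set V := {v | ∃ w, G.Adj v w}

/-- `G` is obtained from `G'` by 3-summing wheels onto distinct triangles of `G'`. -/
def SumWheelsOnto {V U : Type*} (G : SimpleGraph V) (G' : SimpleGraph U) : Prop :=
  ∃ (g : U ↪ V) (k : ℕ) (Wp : Fin k → Set V) (T : Fin k → Set U),
    (∀ i, (T i).ncard = 3) ∧
    (∀ i, ∀ x ∈ T i, ∀ y ∈ T i, x ≠ y → G'.Adj x y) ∧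
    Function.Injective T ∧
    (∀ i, Disjoint (Wp i) (Set.range ⇑g)) ∧
    (Pairwise fun i j => Disjoint (Wp i) (Wp j)) ∧
    (Set.range ⇑g ∪ ⋃ i, Wp i) = Set.univ ∧
    (∀ i, IsWheel (deltaGraph G (Wp i ∪ ⇑g '' T i) (⇑g '' T i))) ∧
    (∀ a b : U, G.Adj (g a) (g b) → G'.Adj a b) ∧
    (∀ a b : U, G'.Adj a b → (G.Adj (g a) (g b) ∨ ∃ i, a ∈ T i ∧ b ∈ T i)) ∧
    (∀ ⦃x y : V⦄, G.Adj x y → (x ∈ Set.range ⇑g ∧ y ∈ Set.range ⇑g) ∨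
      ∃ i, x ∈ Wp i ∪ ⇑g '' T i ∧ y ∈ Wp i ∪ ⇑g '' T i) ∧
    (∀ i, ∀ x ∈ Wp i, ∀ ⦃y : V⦄, G.Adj x y → y ∈ Wp i ∪ ⇑g '' T i)

/-- `H` has an edge whose deletion and contraction are both nonplanar. -/
def HasBadEdge {V : Type*} (H : SimpleGraph V) : Prop :=
  ∃ u v : V, H.Adj u v ∧ ¬ Planar (H.deleteEdges {s(u, v)}) ∧ ¬ Planar (contractEdge H u v)

/-!
Let `y` be the new vertex of `G₁^Y`, let `T` be the separator and `C` the set of vertices outside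
`G₁`. By 3-connectivity, fewer than three vertices never separate `y` from another vertex of
`G₁^Y`, and `y` has degree three; this turns a `K₅` minor into a `K₃,₃` minor, so `G₁^Y` has a
`K₃,₃` model. What survives of it in `G₁` is complete, lacks one edge or lacks one branch set, and
the missing piece is to be attached to two, respectively three, vertices of `T`. A connected subset
of `C` adjacent to these vertices completes the model, and then `K33+`-freeness forces it to be all
of `C`: thus `C` is minimal among the connected sets adjacent to them (and the first case is
impossible). In the case of three vertices, `K33h`-freeness forbids a triangle minor in `C` rooted
at `T`, and this makes `C` minimal for some two of the three. A minimal connected set adjacent to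
two vertices is the interior of a path between them that is induced up to an edge joining its ends.
By 3-connectivity each interior vertex is adjacent to the third vertex of `T`, and adding the
triangle on `T` closes the path to the rim of a wheel.
-/

/-! ### Touching sets and connected sets -/

section Touching

variable {V : Type*} {G : SimpleGraph V} {S T S' T' C D X K : Set V} {a u v : V}

/-- Some edge of `G` joins `S` to `T`; a vertex `x` is adjacent to `S` when `S` touches `{x}`. -/
def Touches (G : SimpleGraph V) (S T : Set V) : Prop := ∃ u ∈ S, ∃ w ∈ T, G.Adj u w

lemma Touches.symm (h : Touches G S T) : Touches G T S := by
  obtain ⟨u, hu, w, hw, huw⟩ := h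
  exact ⟨w, hw, u, hu, huw.symm⟩

lemma Touches.mono (h : Touches G S T) (hS : S ⊆ S') (hT : T ⊆ T') : Touches G S' T' := by
  obtain ⟨u, hu, w, hw, huw⟩ := h
  exact ⟨u, hS hu, w, hT hw, huw⟩

lemma touches_union_left : Touches G (S ∪ S') T ↔ Touches G S T ∨ Touches G S' T := by
  simp only [Touches, Set.mem_union, or_and_right, exists_or]

lemma touches_singleton : Touches G S {v} ↔ ∃ u ∈ S, G.Adj u v := by
  simp only [Touches, Set.mem_singleton_iff, exists_eq_left]

/-- The neighbourhood of the vertex set `S`: the vertices outside `S` that are adjacent to `S`. -/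
def outerBoundary (G : SimpleGraph V) (S : Set V) : Set V := {w | w ∉ S ∧ ∃ u ∈ S, G.Adj u w}

lemma connected_induce_singleton (v : V) : (G.induce {v}).Connected :=
  haveI : Nonempty ({v} : Set V) := ⟨⟨v, rfl⟩⟩
  ⟨Preconnected.of_subsingleton⟩

lemma connected_induce_union_of_touches (hS : (G.induce S).Connected) (hT : (G.induce T).Connected)
    (h : Touches G S T) : (G.induce (S ∪ T)).Connected := by
  obtain ⟨u, hu, w, hw, huw⟩ := h
  exact connected_induce_union hS.preconnected hT.preconnected hu hw huw

lemma nonempty_of_connected_induce (hS : (G.induce S).Connected) : S.Nonempty :=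
  Set.nonempty_coe_sort.1 hS.nonempty

lemma touches_diff_of_connected (hC : (G.induce C).Connected) (hSC : S ⊆ C) (hS : S.Nonempty)
    (hne : S ≠ C) : Touches G S (C \ S) := by
  obtain ⟨s, hs⟩ := hS
  obtain ⟨c, hcC, hcS⟩ := Set.exists_of_ssubset (hSC.ssubset_of_ne hne)
  obtain ⟨p⟩ := hC.preconnected ⟨s, hSC hs⟩ ⟨c, hcC⟩
  obtain ⟨d, -, h₁, h₂⟩ := p.exists_boundary_dart {u : C | u.1 ∈ S} hs hcS
  exact ⟨d.fst, h₁, d.snd, ⟨d.snd.2, h₂⟩, d.adj⟩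

/-- `K` is the vertex set of a connected component of `G[X]`. -/
structure IsComp (G : SimpleGraph V) (X K : Set V) : Prop where
  subset : K ⊆ X
  connected : (G.induce K).Connected
  closed : ∀ ⦃u w : V⦄, u ∈ K → w ∈ X → G.Adj u w → w ∈ K

lemma exists_isComp_mem (ha : a ∈ X) : ∃ K, IsComp G X K ∧ a ∈ K := by
  have haK : a ∈ ⋃₀ {S | S ⊆ X ∧ a ∈ S ∧ (G.induce S).Connected} :=
    ⟨{a}, ⟨Set.singleton_subset_iff.2 ha, rfl, connected_induce_singleton a⟩, rfl⟩
  refine ⟨_, ⟨Set.sUnion_subset fun S hS => hS.1, ?_, ?_⟩, haK⟩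
  · obtain ⟨S, hS, -⟩ := haK
    exact induce_sUnion_connected_of_pairwise_not_disjoint ⟨S, hS⟩
      (fun hS hT => ⟨a, hS.2.1, hT.2.1⟩) fun hS => hS.2.2
  · rintro u w ⟨S, ⟨hSX, haS, hS⟩, hu⟩ hw huw
    refine ⟨S ∪ {w}, ⟨Set.union_subset hSX (Set.singleton_subset_iff.2 hw), Or.inl haS, ?_⟩,
      Or.inr rfl⟩
    exact connected_induce_union_of_touches hS (connected_induce_singleton w) ⟨u, hu, w, rfl, huw⟩

lemma IsComp.eq_of_connected (hK : IsComp G X K) (hS : (G.induce S).Connected) (hSX : S ⊆ X)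
    (hKS : K ⊆ S) : K = S := by
  by_contra hne
  obtain ⟨u, hu, w, hw, huw⟩ :=
    touches_diff_of_connected hS hKS (nonempty_of_connected_induce hK.connected) hne
  exact hw.2 (hK.closed hu (hSX hw.1) huw)

lemma IsComp.subset_of_mem (hK : IsComp G X K) (hS : (G.induce S).Connected) (hSX : S ⊆ X)
    (hu : u ∈ K) (huS : u ∈ S) : S ⊆ K := by
  have hKS : (G.induce (K ∪ S)).Connected :=
    induce_union_connected hK.connected.preconnected hS.preconnected ⟨u, hu, huS⟩
  rw [hK.eq_of_connected hKS (Set.union_subset hK.subset hSX) Set.subset_union_left]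
  exact Set.subset_union_right

lemma IsComp.eq_or_disjoint (hK : IsComp G X K) (hS : IsComp G X S) : K = S ∨ Disjoint K S := by
  refine or_iff_not_imp_right.2 fun h => ?_
  obtain ⟨u, huK, huS⟩ := Set.not_disjoint_iff.1 h
  exact (hS.subset_of_mem hK.connected hK.subset huS huK).antisymm
    (hK.subset_of_mem hS.connected hS.subset huK huS)

lemma IsComp.touches_singleton (hC : (G.induce C).Connected) (hv : v ∈ C)
    (hK : IsComp G (C \ {v}) K) : Touches G K {v} := by
  have hKC : K ⊆ C := fun u hu => (hK.subset hu).1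
  obtain ⟨u, hu, w, hw, huw⟩ := touches_diff_of_connected hC hKC
    (nonempty_of_connected_induce hK.connected) fun h => (hK.subset (h.symm ▸ hv)).2 rfl
  refine ⟨u, hu, w, ?_, huw⟩
  by_contra hwv
  exact hw.2 (hK.closed hu ⟨hw.1, hwv⟩ huw)

lemma IsComp.connected_diff (hC : (G.induce C).Connected) (hv : v ∈ C)
    (hK : IsComp G (C \ {v}) K) : (G.induce (C \ K)).Connected := by
  have hvK : v ∉ K := fun h => (hK.subset h).2 rfl
  obtain ⟨M, hM, hvM⟩ := exists_isComp_mem (G := G) (X := C \ K) ⟨hv, hvK⟩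
  suffices M = C \ K from this ▸ hM.connected
  have hMC : M ⊆ C := fun u hu => (hM.subset hu).1
  by_contra hne
  obtain ⟨w, ⟨hwC, hwK⟩, hwM⟩ := Set.exists_of_ssubset (hM.subset.ssubset_of_ne hne)
  have hKM : K ∪ M ≠ C := fun h => (h.symm ▸ hwC : w ∈ K ∪ M).elim hwK hwM
  obtain ⟨u, hu, w, ⟨hwC, hw⟩, huw⟩ := touches_diff_of_connected hC
    (Set.union_subset (fun u hu => (hK.subset hu).1) hMC) ⟨v, Or.inr hvM⟩ hKM
  rw [Set.mem_union, not_or] at hw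
  rcases hu with hu | hu
  · exact hw.1 (hK.closed hu ⟨hwC, fun h => hw.2 (h ▸ hvM)⟩ huw)
  · exact hw.2 (hM.closed hu ⟨hwC, hw.1⟩ huw)

lemma IsComp.touches_diff (hC : (G.induce C).Connected) (hv : v ∈ C)
    (hK : IsComp G (C \ {v}) K) : Touches G K (C \ K) :=
  (hK.touches_singleton hC hv).mono subset_rfl
    (Set.singleton_subset_iff.2 ⟨hv, fun h => (hK.subset h).2 rfl⟩)

lemma exists_connected_split (hC : (G.induce C).Connected) {q r : V} (hq : q ∈ C) (hr : r ∈ C)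
    (hqr : q ≠ r) : ∃ P Q, P ∪ Q = C ∧ Disjoint P Q ∧ (G.induce P).Connected ∧
      (G.induce Q).Connected ∧ Touches G P Q ∧ q ∈ P ∧ r ∈ Q := by
  obtain ⟨K, hK, hqK⟩ := exists_isComp_mem (G := G) (X := C \ {r}) ⟨hq, hqr⟩
  exact ⟨K, C \ K, Set.union_sdiff_cancel fun u hu => (hK.subset hu).1, Set.disjoint_sdiff_right,
    hK.connected, hK.connected_diff hC hr, hK.touches_diff hC hr, hqK, hr,
    fun h => (hK.subset h).2 rfl⟩

lemma exists_connected_diff_singleton [Finite V] (hC : (G.induce C).Connected)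
    (hS : (G.induce S).Connected) (hSC : S ⊂ C) :
    ∃ c ∈ C, c ∉ S ∧ (G.induce (C \ {c})).Connected := by
  obtain ⟨M, hSM, ⟨hM, hMC⟩, hmax⟩ := (Set.toFinite
    {T : Set V | (G.induce T).Connected ∧ T ⊂ C}).exists_le_maximal (a := S) ⟨hS, hSC⟩
  obtain ⟨u, hu, c, ⟨hcC, hcM⟩, huc⟩ := touches_diff_of_connected hC hMC.subset
    (nonempty_of_connected_induce hM) hMC.ne
  have hMc : (G.induce (M ∪ {c})).Connected :=
    connected_induce_union_of_touches hM (connected_induce_singleton c) ⟨u, hu, c, rfl, huc⟩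
  have hins : M ∪ {c} = C := by
    by_contra hne
    have hMcC : M ∪ {c} ⊆ C := Set.union_subset hMC.subset (Set.singleton_subset_iff.2 hcC)
    exact hcM (hmax ⟨hMc, hMcC.ssubset_of_ne hne⟩ Set.subset_union_left (Or.inr rfl))
  refine ⟨c, hcC, fun h => hcM (hSM h), ?_⟩
  rwa [← hins, Set.union_sdiff_right, Set.sdiff_singleton_eq_self hcM]

end Touching

/-! ### Models of minors -/

section Models

variable {V W W' ι κ ι' κ' : Type*} {G : SimpleGraph V} {H : SimpleGraph W} {B : W → Set V}
  {R : ι → κ → Prop} {X : ι → Set V} {Y : κ → Set V}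

/-- The sets `B w` are the branch sets of a model of `H` as a minor of `G`. -/
structure IsModel (H : SimpleGraph W) (G : SimpleGraph V) (B : W → Set V) : Prop where
  connected (w : W) : (G.induce (B w)).Connected
  disjoint : Pairwise fun w₁ w₂ => Disjoint (B w₁) (B w₂)
  touches ⦃w₁ w₂ : W⦄ : H.Adj w₁ w₂ → Touches G (B w₁) (B w₂)

lemma isMinor_iff_exists_isModel : IsMinor H G ↔ ∃ B, IsModel H G B :=
  ⟨fun ⟨B, _, hc, hd, ht⟩ => ⟨B, hc, hd, ht⟩, fun ⟨B, h⟩ =>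
    ⟨B, fun w => nonempty_of_connected_induce (h.connected w), h.connected, h.disjoint, h.touches⟩⟩

lemma IsModel.comp {H' : SimpleGraph W'} (h : IsModel H G B) (f : H' →g H)
    (hf : Function.Injective f) : IsModel H' G (B ∘ f) where
  connected w := h.connected (f w)
  disjoint _ _ hne := h.disjoint (hf.ne hne)
  touches _ _ hadj := h.touches (f.map_adj hadj)

lemma IsModel.update [DecidableEq W] (h : IsModel H G B) {w : W} {S : Set V}
    (hS : (G.induce S).Connected) (hdisj : ∀ w' ≠ w, Disjoint S (B w'))
    (ht : ∀ w', H.Adj w w' → Touches G S (B w')) : IsModel H G (Function.update B w S) where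
  connected := (Function.forall_update_iff B fun _ T => (G.induce T).Connected).2
    ⟨hS, fun w' _ => h.connected w'⟩
  disjoint w₁ w₂ hne := by
    obtain rfl | h₁ := eq_or_ne w₁ w
    · simpa only [Function.update_self, Function.update_of_ne hne.symm] using hdisj w₂ hne.symm
    obtain rfl | h₂ := eq_or_ne w₂ w
    · simpa only [Function.update_self, Function.update_of_ne hne] using (hdisj w₁ hne).symm
    simpa only [Function.update_of_ne h₁, Function.update_of_ne h₂] using h.disjoint hne
  touches w₁ w₂ hadj := by
    obtain rfl | h₁ := eq_or_ne w₁ w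
    · simpa only [Function.update_self, Function.update_of_ne hadj.ne'] using ht w₂ hadj
    obtain rfl | h₂ := eq_or_ne w₂ w
    · simpa only [Function.update_self, Function.update_of_ne h₁] using (ht w₁ hadj.symm).symm
    simpa only [Function.update_of_ne h₁, Function.update_of_ne h₂] using h.touches hadj

lemma IsModel.exists_iUnion_eq_univ [Finite V] [Nonempty W] (hG : G.Connected)
    (h : IsModel H G B) : ∃ B', IsModel H G B' ∧ ⋃ w, B' w = Set.univ := by
  classical
  obtain ⟨U, -, ⟨B', hB', rfl⟩, hmax⟩ := (Set.toFinite
    {U : Set V | ∃ B', IsModel H G B' ∧ ⋃ w, B' w = U}).exists_le_maximal (a := ⋃ w, B w)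
      ⟨B, h, rfl⟩
  refine ⟨B', hB', ?_⟩
  by_contra hne
  obtain ⟨w₀⟩ := ‹Nonempty W›
  obtain ⟨b₀, hb₀⟩ := nonempty_of_connected_induce (hB'.connected w₀)
  obtain ⟨u, hu, c, ⟨-, hc⟩, huc⟩ := touches_diff_of_connected (G := G) (C := Set.univ)
    ((induceUnivIso G).connected_iff.2 hG) (Set.subset_univ (⋃ w, B' w))
    ⟨b₀, Set.mem_iUnion_of_mem w₀ hb₀⟩ hne
  obtain ⟨w, hw⟩ := Set.mem_iUnion.1 hu
  have hmodel : IsModel H G (Function.update B' w (B' w ∪ {c})) :=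
    hB'.update (connected_induce_union_of_touches (hB'.connected w) (connected_induce_singleton c)
        ⟨u, hw, c, rfl, huc⟩)
      (fun w' hne => (hB'.disjoint hne.symm).union_left
        (Set.disjoint_singleton_left.2 fun h => hc (Set.mem_iUnion_of_mem w' h)))
      fun w' hadj => (hB'.touches hadj).mono Set.subset_union_left subset_rfl
  have hsub : ∀ w', B' w' ⊆ Function.update B' w (B' w ∪ {c}) w' :=
    (Function.forall_update_iff B' fun w' T => B' w' ⊆ T).2
      ⟨Set.subset_union_left, fun _ _ => subset_rfl⟩
  refine hc (hmax ⟨_, hmodel, rfl⟩ (Set.iUnion_mono hsub) (Set.mem_iUnion_of_mem w ?_))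
  rw [Function.update_self]
  exact Or.inr rfl

/-- The sets `X i` and `Y j` are the branch sets of a model, in `G`, of the bipartite graph with
sides `ι` and `κ` whose edges are the pairs related by `R`. -/
structure IsBipModel (G : SimpleGraph V) (R : ι → κ → Prop) (X : ι → Set V) (Y : κ → Set V) :
    Prop where
  connected_left (i : ι) : (G.induce (X i)).Connected
  connected_right (j : κ) : (G.induce (Y j)).Connected
  disjoint_left : Pairwise fun i i' => Disjoint (X i) (X i')
  disjoint_right : Pairwise fun j j' => Disjoint (Y j) (Y j')
  disjoint (i : ι) (j : κ) : Disjoint (X i) (Y j)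
  touches ⦃i : ι⦄ ⦃j : κ⦄ : R i j → Touches G (X i) (Y j)

lemma IsBipModel.swap (h : IsBipModel G R X Y) : IsBipModel G (fun j i => R i j) Y X where
  connected_left := h.connected_right
  connected_right := h.connected_left
  disjoint_left := h.disjoint_right
  disjoint_right := h.disjoint_left
  disjoint j i := (h.disjoint i j).symm
  touches _ _ hR := (h.touches hR).symm

lemma IsBipModel.comp (h : IsBipModel G R X Y) {f : ι' → ι} {g : κ' → κ}
    (hf : Function.Injective f) (hg : Function.Injective g) :
    IsBipModel G (fun i j => R (f i) (g j)) (X ∘ f) (Y ∘ g) where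
  connected_left i := h.connected_left (f i)
  connected_right j := h.connected_right (g j)
  disjoint_left _ _ hne := h.disjoint_left (hf.ne hne)
  disjoint_right _ _ hne := h.disjoint_right (hg.ne hne)
  disjoint i j := h.disjoint (f i) (g j)
  touches _ _ hR := h.touches hR

lemma IsBipModel.update_left [DecidableEq ι] {R' : ι → κ → Prop} (h : IsBipModel G R X Y) {i₀ : ι}
    {S : Set V} (hS : (G.induce S).Connected) (hX : ∀ i ≠ i₀, Disjoint S (X i))
    (hY : ∀ j, Disjoint S (Y j)) (hR : ∀ i ≠ i₀, ∀ j, R' i j → R i j)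
    (ht : ∀ j, R' i₀ j → Touches G S (Y j)) :
    IsBipModel G R' (Function.update X i₀ S) Y where
  connected_left := (Function.forall_update_iff X fun _ T => (G.induce T).Connected).2
    ⟨hS, fun i _ => h.connected_left i⟩
  connected_right := h.connected_right
  disjoint_left i i' hne := by
    obtain rfl | h₁ := eq_or_ne i i₀
    · simpa only [Function.update_self, Function.update_of_ne hne.symm] using hX i' hne.symm
    obtain rfl | h₂ := eq_or_ne i' i₀
    · simpa only [Function.update_self, Function.update_of_ne hne] using (hX i hne).symm
    simpa only [Function.update_of_ne h₁, Function.update_of_ne h₂] using h.disjoint_left hne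
  disjoint_right := h.disjoint_right
  disjoint := (Function.forall_update_iff X fun _ T => ∀ j, Disjoint T (Y j)).2
    ⟨hY, fun i _ => h.disjoint i⟩
  touches := (Function.forall_update_iff X fun i T => ∀ j, R' i j → Touches G T (Y j)).2
    ⟨ht, fun i hi j hij => h.touches (hR i hi j hij)⟩

lemma isMinor_K33_iff_exists_isBipModel :
    IsMinor K33 G ↔ ∃ X Y : Fin 3 → Set V, IsBipModel G (fun _ _ => True) X Y := by
  rw [isMinor_iff_exists_isModel]
  constructor
  · rintro ⟨B, hB⟩
    exact ⟨B ∘ Sum.inl, B ∘ Sum.inr, fun i => hB.connected _, fun j => hB.connected _,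
      fun i i' hne => hB.disjoint (Sum.inl_injective.ne hne),
      fun j j' hne => hB.disjoint (Sum.inr_injective.ne hne), fun i j => hB.disjoint Sum.inl_ne_inr,
      fun i j _ => hB.touches (by simp [K33])⟩
  · rintro ⟨X, Y, h⟩
    refine ⟨Sum.elim X Y, ?_, ?_, ?_⟩
    · rintro (i | j)
      exacts [h.connected_left i, h.connected_right j]
    · rintro (i | j) (i' | j') hne
      exacts [h.disjoint_left fun e => hne (e ▸ rfl), h.disjoint i j', (h.disjoint i' j).symm,
        h.disjoint_right fun e => hne (e ▸ rfl)]
    · rintro (i | j) (i' | j') hadj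
      · simp [K33] at hadj
      · exact h.touches trivial
      · exact (h.touches trivial).symm
      · simp [K33] at hadj

end Models

/-! ### From a `K₅` minor to a `K₃,₃` minor -/

section Routing

variable {V ι : Type*} {G : SimpleGraph V} {X Y : Set V} {v : V}

/-- The set of indices `i` such that `S` touches the member `Z i` of the family `Z`. -/
def touchedBy (G : SimpleGraph V) (S : Set V) (Z : ι → Set V) : Set ι := {i | Touches G S (Z i)}

lemma exists_route (hX : (G.induce X).Connected) (hv : v ∈ X) (hY : (G.induce Y).Connected)
    (hXY : Touches G X Y) : ∃ Y', Y ⊆ Y' ∧ (G.induce Y').Connected ∧ Touches G Y' {v} ∧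
      (Y' = Y ∨ ∃ K, IsComp G (X \ {v}) K ∧ Touches G K Y ∧ Y' = Y ∪ K) := by
  obtain ⟨u, hu, w, hw, huw⟩ := hXY
  obtain rfl | huv := eq_or_ne u v
  · exact ⟨Y, subset_rfl, hY, ⟨w, hw, u, rfl, huw.symm⟩, .inl rfl⟩
  · obtain ⟨K, hK, huK⟩ := exists_isComp_mem (G := G) (X := X \ {v}) ⟨hu, huv⟩
    have hKY : Touches G K Y := ⟨u, huK, w, hw, huw⟩
    exact ⟨Y ∪ K, Set.subset_union_left,
      connected_induce_union_of_touches hY hK.connected hKY.symm,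
      (hK.touches_singleton hX hv).mono Set.subset_union_right subset_rfl,
      .inr ⟨K, hK, hKY, rfl⟩⟩

lemma exists_disjoint_routes {Y : ι → Set V} (hX : (G.induce X).Connected) (hv : v ∈ X)
    (hY : ∀ i, (G.induce (Y i)).Connected) (hdisj : Pairwise fun i j => Disjoint (Y i) (Y j))
    (hXdisj : ∀ i, Disjoint X (Y i)) (hXY : ∀ i, Touches G X (Y i))
    (hK : ∀ K, IsComp G (X \ {v}) K → (touchedBy G K Y).Subsingleton) :
    ∃ Y' : ι → Set V, (∀ i, Y i ⊆ Y' i) ∧ (∀ i, Y' i ⊆ Y i ∪ X \ {v}) ∧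
      (∀ i, (G.induce (Y' i)).Connected) ∧ (Pairwise fun i j => Disjoint (Y' i) (Y' j)) ∧
      ∀ i, Touches G (Y' i) {v} := by
  choose Y' hsub hconn htouch hroute using fun i => exists_route hX hv (hY i) (hXY i)
  refine ⟨Y', hsub, fun i => ?_, hconn, fun i j hne => ?_, htouch⟩
  · obtain h | ⟨K, hKX, -, h⟩ := hroute i
    · exact h ▸ Set.subset_union_left
    · exact h ▸ Set.union_subset_union_right _ hKX.subset
  · have hdisjK : ∀ K, IsComp G (X \ {v}) K → ∀ i, Disjoint K (Y i) := fun K hK i =>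
      (hXdisj i).mono_left fun u hu => (hK.subset hu).1
    obtain hi | ⟨K, hKX, hKi, hi⟩ := hroute i <;> obtain hj | ⟨L, hLX, hLj, hj⟩ := hroute j <;>
      simp only [hi, hj]
    · exact hdisj hne
    · exact (hdisj hne).union_right (hdisjK L hLX i).symm
    · exact (hdisj hne).union_left (hdisjK K hKX j)
    · refine ((hdisj hne).union_right (hdisjK L hLX i).symm).union_left
        ((hdisjK K hKX j).union_right ?_)
      obtain rfl | h := hKX.eq_or_disjoint hLX
      exacts [absurd (hK K hKX hKi hLj) hne, h]

end Routing

section K5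

variable {V : Type*} {G : SimpleGraph V} {D E P Q : Set V} {Z : Fin 4 → Set V} {v : V}

lemma exists_pairs_of_union_eq_univ {S T : Set (Fin 4)} (hS : S.Nontrivial) (hT : T.Nontrivial)
    (hST : S ∪ T = Set.univ) : ∃ i ∈ S, ∃ j ∈ S, ∃ k ∈ T, ∃ l ∈ T, [i, j, k, l].Nodup := by
  classical
  have hcompl : Tᶜ ⊆ S := fun i hi => (Set.eq_univ_iff_forall.1 hST i).resolve_right hi
  have hTcard : (Tᶜ.toFinset).card ≤ 2 := by
    rw [Set.toFinset_compl, Finset.card_compl, Fintype.card_fin]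
    have : 1 < T.toFinset.card := Finset.one_lt_card_iff_nontrivial.2 (by simpa using hT)
    omega
  have hScard : 2 ≤ S.toFinset.card := Finset.one_lt_card_iff_nontrivial.2 (by simpa using hS)
  obtain ⟨I, hTI, hIS, hI⟩ := Finset.exists_subsuperset_card_eq (Set.toFinset_mono hcompl) hTcard
    hScard
  have hI' : Iᶜ.card = 2 := by rw [Finset.card_compl, hI, Fintype.card_fin]
  obtain ⟨i, j, hij, rfl⟩ := Finset.card_eq_two.1 hI
  obtain ⟨k, l, hkl, hIc⟩ := Finset.card_eq_two.1 hI'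
  have hT : ∀ m ∈ ({k, l} : Finset (Fin 4)), m ∈ T ∧ m ≠ i ∧ m ≠ j := fun m hm => by
    rw [← hIc, Finset.mem_compl] at hm
    exact ⟨not_not.1 fun h => hm (hTI (by simpa using h)), by simpa [not_or] using hm⟩
  obtain ⟨hk, hki, hkj⟩ := hT k (by simp)
  obtain ⟨hl, hli, hlj⟩ := hT l (by simp)
  exact ⟨i, by simpa using hIS (by simp), j, by simpa using hIS (by simp), k, hk, l, hl,
    by simp [hij, hkl, hki.symm, hkj.symm, hli.symm, hlj.symm]⟩

/-- A model of `K₅` that covers `G`, one of whose branch sets is split into two touching connected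
parts `P` and `Q`; the other branch sets are the `Z i`. -/
structure IsSplitModel (G : SimpleGraph V) (P Q : Set V) (Z : Fin 4 → Set V) : Prop where
  model : IsModel ⊤ G Z
  connected_left : (G.induce P).Connected
  connected_right : (G.induce Q).Connected
  disjoint : Disjoint P Q
  disjoint_left (i : Fin 4) : Disjoint P (Z i)
  disjoint_right (i : Fin 4) : Disjoint Q (Z i)
  touches : Touches G P Q
  touchedBy_union : touchedBy G P Z ∪ touchedBy G Q Z = Set.univ
  union_eq_univ : P ∪ Q ∪ ⋃ i, Z i = Set.univ

lemma IsSplitModel.symm (h : IsSplitModel G P Q Z) : IsSplitModel G Q P Z where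
  model := h.model
  connected_left := h.connected_right
  connected_right := h.connected_left
  disjoint := h.disjoint.symm
  disjoint_left := h.disjoint_right
  disjoint_right := h.disjoint_left
  touches := h.touches.symm
  touchedBy_union := Set.union_comm _ _ ▸ h.touchedBy_union
  union_eq_univ := Set.union_comm P Q ▸ h.union_eq_univ

lemma IsSplitModel.isMinor_K33 (h : IsSplitModel G P Q Z) (hP : (touchedBy G P Z).Nontrivial)
    (hQ : (touchedBy G Q Z).Nontrivial) : IsMinor K33 G := by
  obtain ⟨i, hi, j, hj, k, hk, l, hl, hnd⟩ :=
    exists_pairs_of_union_eq_univ hP hQ h.touchedBy_union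
  simp only [List.nodup_cons, List.mem_cons, List.not_mem_nil, or_false, not_or, not_false_eq_true,
    List.nodup_nil, and_true, ← ne_eq] at hnd
  obtain ⟨⟨hij, hik, hil⟩, ⟨hjk, hjl⟩, hkl⟩ := hnd
  have hZd : ∀ {m n}, m ≠ n → Disjoint (Z m) (Z n) := fun hne => h.model.disjoint hne
  have hZt : ∀ {m n}, m ≠ n → Touches G (Z m) (Z n) := fun hne => h.model.touches hne
  refine isMinor_K33_iff_exists_isBipModel.2
    ⟨![P, Z k, Z l], ![Q, Z i, Z j], ⟨?_, ?_, ?_, ?_, ?_, ?_⟩⟩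
  · simp [Fin.forall_fin_succ, h.connected_left, h.model.connected]
  · simp [Fin.forall_fin_succ, h.connected_right, h.model.connected]
  · simp [Pairwise, Fin.forall_fin_succ, h.disjoint_left, fun m => (h.disjoint_left m).symm,
      hZd hkl, hZd hkl.symm]
  · simp [Pairwise, Fin.forall_fin_succ, h.disjoint_right, fun m => (h.disjoint_right m).symm,
      hZd hij, hZd hij.symm]
  · simp [Fin.forall_fin_succ, h.disjoint, h.disjoint_left, fun m => (h.disjoint_right m).symm,
      hZd hik.symm, hZd hil.symm, hZd hjk.symm, hZd hjl.symm]
  · simp [Fin.forall_fin_succ, h.touches, show Touches G P (Z i) from hi,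
      show Touches G P (Z j) from hj, Touches.symm hk, Touches.symm hl, hZt hik.symm, hZt hil.symm,
      hZt hjk.symm, hZt hjl.symm]

lemma IsSplitModel.subsingleton_right (h : IsSplitModel G P Q Z) (hK : ¬ IsMinor K33 G)
    (hP : (touchedBy G P Z).Nontrivial) : (touchedBy G Q Z).Subsingleton :=
  Set.not_nontrivial_iff.1 fun hQ => hK (h.isMinor_K33 hP hQ)

lemma IsSplitModel.update (h : IsSplitModel G D E Z) (hD : (touchedBy G D Z).Subsingleton)
    {i : Fin 4} (hi : i ∈ touchedBy G D Z) :
    IsSplitModel G D (Z i) (Function.update Z i E) ∧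
      (touchedBy G D (Function.update Z i E)).Subsingleton where
  left :=
    { model := by
        refine h.model.update h.connected_right (fun j _ => h.disjoint_right j) fun j hij => ?_
        have hj : j ∈ touchedBy G D Z ∪ touchedBy G E Z := h.touchedBy_union.symm ▸ Set.mem_univ j
        exact hj.resolve_left fun hj => hij (hD hi hj)
      connected_left := h.connected_left
      connected_right := h.model.connected i
      disjoint := h.disjoint_left i
      disjoint_left := (Function.forall_update_iff Z fun _ T => Disjoint D T).2
        ⟨h.disjoint, fun j _ => h.disjoint_left j⟩
      disjoint_right := (Function.forall_update_iff Z fun _ T => Disjoint (Z i) T).2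
        ⟨(h.disjoint_right i).symm, fun j hj => h.model.disjoint hj.symm⟩
      touches := hi
      touchedBy_union := by
        refine Set.eq_univ_of_forall ((Function.forall_update_iff Z fun _ T =>
          Touches G D T ∨ Touches G (Z i) T).2 ⟨.inl h.touches, fun j hj => .inr ?_⟩)
        exact h.model.touches hj.symm
      union_eq_univ := by
        refine Set.eq_univ_of_forall fun w => ?_
        have hw : w ∈ D ∪ E ∪ ⋃ j, Z j := h.union_eq_univ.symm ▸ Set.mem_univ w
        simp only [Set.mem_union, Set.mem_iUnion] at hw ⊢
        obtain (hw | hw) | ⟨j, hw⟩ := hw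
        · exact .inl (.inl hw)
        · exact .inr ⟨i, by rwa [Function.update_self]⟩
        · obtain rfl | hj := eq_or_ne j i
          · exact .inl (.inr hw)
          · exact .inr ⟨j, by rwa [Function.update_of_ne hj]⟩ }
  right := by
    have hD' : touchedBy G D (Function.update Z i E) ⊆ {i} := fun j hj => by
      by_contra hne
      rw [touchedBy, Set.mem_ofPred_eq, Function.update_of_ne hne] at hj
      exact hne (hD hj hi)
    exact Set.subsingleton_singleton.anti hD'

lemma IsSplitModel.absorb (h : IsSplitModel G D (P ∪ Q) Z) (hPQ : Disjoint P Q)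
    (hP : (G.induce P).Connected) (hQ : (G.induce Q).Connected) (htouch : Touches G P Q)
    (hDQ : Touches G D Q) : IsSplitModel G P (D ∪ Q) Z where
  model := h.model
  connected_left := hP
  connected_right := connected_induce_union_of_touches h.connected_left hQ hDQ
  disjoint := (h.disjoint.mono_right Set.subset_union_left).symm.union_right hPQ
  disjoint_left i := (h.disjoint_right i).mono_left Set.subset_union_left
  disjoint_right i :=
    (h.disjoint_left i).union_left ((h.disjoint_right i).mono_left Set.subset_union_right)
  touches := htouch.mono subset_rfl Set.subset_union_right
  touchedBy_union := by
    rw [← h.touchedBy_union]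
    ext i
    simp only [touchedBy, Set.mem_union, Set.mem_ofPred_eq, touches_union_left]
    tauto
  union_eq_univ := by
    rw [← h.union_eq_univ, ← Set.union_assoc D, Set.union_comm P, Set.union_right_comm D]

/-- A connected set `D ∋ v` that can be split off from a branch set of a model of `K₅` while
touching at most one of the other four branch sets. -/
def IsPendant (G : SimpleGraph V) (v : V) (D : Set V) : Prop :=
  v ∈ D ∧ ∃ E Z, IsSplitModel G D E Z ∧ (touchedBy G D Z).Subsingleton

lemma IsModel.isSplitModel {B : Fin 5 → Set V} (hB : IsModel K5 G B)
    (hcover : ⋃ i, B i = Set.univ) {i₀ : Fin 5} (hv : v ∈ B i₀) {K : Set V}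
    (hK : IsComp G (B i₀ \ {v}) K) : IsSplitModel G K (B i₀ \ K) (B ∘ i₀.succAbove) := by
  have hKB : K ⊆ B i₀ := fun u hu => (hK.subset hu).1
  have hdisj : ∀ i, Disjoint (B i₀) (B (i₀.succAbove i)) := fun i =>
    hB.disjoint (i₀.succAbove_ne i).symm
  exact
    { model := hB.comp ⟨i₀.succAbove, fun h => i₀.succAbove_right_injective.ne h.ne⟩
        i₀.succAbove_right_injective
      connected_left := hK.connected
      connected_right := hK.connected_diff (hB.connected i₀) hv
      disjoint := Set.disjoint_sdiff_right
      disjoint_left := fun i => (hdisj i).mono_left hKB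
      disjoint_right := fun i => (hdisj i).mono_left Set.sdiff_subset
      touches := hK.touches_diff (hB.connected i₀) hv
      touchedBy_union := Set.eq_univ_of_forall fun i => touches_union_left.1 <| by
        rw [Set.union_sdiff_cancel hKB]
        exact hB.touches (i₀.succAbove_ne i).symm
      union_eq_univ := by
        rw [Set.union_sdiff_cancel hKB, ← hcover]
        ext w
        simp only [Set.mem_union, Set.mem_iUnion, Fin.exists_iff_succAbove i₀,
          Function.comp_apply] }

lemma exists_isPendant [Finite V] (hG : G.Connected) (hK : ¬ IsMinor K33 G) (h5 : IsMinor K5 G)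
    (hv : (G.neighborSet v).ncard ≤ 3) : ∃ D, IsPendant G v D := by
  obtain ⟨B, hB⟩ := isMinor_iff_exists_isModel.1 h5
  obtain ⟨B, hB, hcover⟩ := hB.exists_iUnion_eq_univ hG
  obtain ⟨i₀, hi₀⟩ := Set.mem_iUnion.1 (hcover.symm ▸ Set.mem_univ v)
  by_cases hroutes : ∀ K, IsComp G (B i₀ \ {v}) K → (touchedBy G K (B ∘ i₀.succAbove)).Subsingleton
  · obtain ⟨Y, -, -, -, hYdisj, hY⟩ := exists_disjoint_routes (hB.connected i₀) hi₀
      (fun i => hB.connected _) (fun i j hne => hB.disjoint (i₀.succAbove_right_injective.ne hne))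
      (fun i => hB.disjoint (i₀.succAbove_ne i).symm)
      (fun i => hB.touches (i₀.succAbove_ne i).symm) hroutes
    choose f hfY hfv using fun i => touches_singleton.1 (hY i)
    have hf : Function.Injective f := fun i j hij => by
      by_contra hne
      exact Set.disjoint_left.1 (hYdisj hne) (hfY i) (hij ▸ hfY j)
    have hrange : Set.range f ⊆ G.neighborSet v := Set.range_subset_iff.2 fun i => (hfv i).symm
    have := Set.ncard_le_ncard hrange
    rw [Set.ncard_range_of_injective hf, Nat.card_eq_fintype_card, Fintype.card_fin] at this
    omega
  · push Not at hroutes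
    obtain ⟨K, hKcomp, hK₂⟩ := hroutes
    have hsplit := hB.isSplitModel hcover hi₀ hKcomp
    exact ⟨B i₀ \ K, ⟨hi₀, fun h => (hKcomp.subset h).2 rfl⟩, _, _, hsplit.symm,
      hsplit.subsingleton_right hK hK₂⟩

lemma IsSplitModel.right_eq_of_maximal (h : IsSplitModel G D E Z) (hK : ¬ IsMinor K33 G)
    (hD : (touchedBy G D Z).Subsingleton) (hmax : Maximal (IsPendant G v) D) {q r : V}
    (hq : q ∈ E) (hr : r ∈ E) (hDq : Touches G D {q}) (hDr : Touches G D {r}) : q = r := by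
  by_contra hqr
  obtain ⟨P, Q, rfl, hPQ, hP, hQ, htouch, hqP, hrQ⟩ :=
    exists_connected_split h.connected_right hq hr hqr
  have hDQ : Touches G D Q := hDr.mono subset_rfl (Set.singleton_subset_iff.2 hrQ)
  have hDP : Touches G D P := hDq.mono subset_rfl (Set.singleton_subset_iff.2 hqP)
  have hPsub : (touchedBy G P Z).Subsingleton := Set.not_nontrivial_iff.1 fun hP₂ => by
    have hsplit := h.absorb hPQ hP hQ htouch hDQ
    have hrD := hmax.2 ⟨.inl hmax.1.1, _, _, hsplit.symm, hsplit.subsingleton_right hK hP₂⟩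
      Set.subset_union_left (.inr hrQ)
    exact Set.disjoint_left.1 h.disjoint hrD hr
  have hQsub : (touchedBy G Q Z).Subsingleton := Set.not_nontrivial_iff.1 fun hQ₂ => by
    have hsplit := (Set.union_comm P Q ▸ h).absorb hPQ.symm hQ hP htouch.symm hDP
    have hqD := hmax.2 ⟨.inl hmax.1.1, _, _, hsplit.symm, hsplit.subsingleton_right hK hQ₂⟩
      Set.subset_union_left (.inr hqP)
    exact Set.disjoint_left.1 h.disjoint hqD hq
  have hcover : touchedBy G D Z ∪ (touchedBy G P Z ∪ touchedBy G Q Z) = Set.univ := by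
    simpa only [touchedBy, touches_union_left, Set.ofPred_or] using h.touchedBy_union
  have hcard := congrArg Set.ncard hcover
  rw [Set.ncard_univ, Nat.card_eq_fintype_card, Fintype.card_fin] at hcard
  have h₁ := Set.ncard_union_le (touchedBy G D Z) (touchedBy G P Z ∪ touchedBy G Q Z)
  have h₂ := Set.ncard_union_le (touchedBy G P Z) (touchedBy G Q Z)
  have := Set.ncard_le_one_iff_subsingleton.2 hD
  have := Set.ncard_le_one_iff_subsingleton.2 hPsub
  have := Set.ncard_le_one_iff_subsingleton.2 hQsub
  omega

/-- No set of fewer than `k` vertices separates the vertex `v` from another vertex: a set `S ∋ v`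
with fewer than `k` neighbours, together with these, covers the whole graph. -/
def KConnectedAt (G : SimpleGraph V) (k : ℕ) (v : V) : Prop :=
  ∀ S : Set V, v ∈ S → (outerBoundary G S).ncard < k → S ∪ outerBoundary G S = Set.univ

lemma KConnectedAt.connected {k : ℕ} (h : KConnectedAt G k v) (hk : 0 < k) : G.Connected := by
  obtain ⟨K, hK, hvK⟩ := exists_isComp_mem (G := G) (Set.mem_univ v)
  have hboundary : outerBoundary G K = ∅ := Set.eq_empty_of_forall_notMem
    fun w ⟨hw, u, hu, huw⟩ => hw (hK.closed hu (Set.mem_univ w) huw)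
  have hcover := h K hvK (by rwa [hboundary, Set.ncard_empty])
  rw [hboundary, Set.union_empty] at hcover
  exact (induceUnivIso G).connected_iff.1 (hcover ▸ hK.connected)

lemma isMinor_K33_of_isMinor_K5 [Finite V] (hconn : KConnectedAt G 3 v)
    (hv : (G.neighborSet v).ncard ≤ 3) (h5 : IsMinor K5 G) : IsMinor K33 G := by
  by_contra hK
  obtain ⟨D₀, hD₀⟩ := exists_isPendant (hconn.connected (by norm_num)) hK h5 hv
  -- A maximal pendant set has at most one neighbour in the rest `E` of its branch set and at most
  -- one in the only other branch set it touches, and so it must cover nearly all of `G`.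
  obtain ⟨D, -, hmax⟩ := (Set.toFinite {D | IsPendant G v D}).exists_le_maximal hD₀
  obtain ⟨hvD, E, Z, hsplit, hD⟩ := hmax.1
  have hE : (outerBoundary G D ∩ E).Subsingleton := fun q ⟨hqD, hqE⟩ r ⟨hrD, hrE⟩ =>
    hsplit.right_eq_of_maximal hK hD hmax hqE hrE (touches_singleton.2 hqD.2)
      (touches_singleton.2 hrD.2)
  have hZ : (outerBoundary G D ∩ ⋃ i, Z i).Subsingleton := by
    rintro q ⟨⟨-, u, hu, huq⟩, hqZ⟩ r ⟨⟨-, w, hw, hwr⟩, hrZ⟩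
    obtain ⟨i, hqi⟩ := Set.mem_iUnion.1 hqZ
    obtain ⟨j, hrj⟩ := Set.mem_iUnion.1 hrZ
    have hi : i ∈ touchedBy G D Z := ⟨u, hu, q, hqi, huq⟩
    have hij : i = j := hD hi ⟨w, hw, r, hrj, hwr⟩
    obtain ⟨hsplit', hD'⟩ := hsplit.update hD hi
    exact hsplit'.right_eq_of_maximal hK hD' hmax hqi (hij ▸ hrj) (touches_singleton.2 ⟨u, hu, huq⟩)
      (touches_singleton.2 ⟨w, hw, hwr⟩)
  have hboundary : outerBoundary G D = outerBoundary G D ∩ E ∪ outerBoundary G D ∩ ⋃ i, Z i := by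
    rw [← Set.inter_union_distrib_left, eq_comm, Set.inter_eq_left]
    intro w hw
    have hwcover : w ∈ D ∪ E ∪ ⋃ i, Z i := hsplit.union_eq_univ.symm ▸ Set.mem_univ w
    rw [Set.union_assoc] at hwcover
    exact hwcover.resolve_left hw.1
  have hcard : (outerBoundary G D).ncard < 3 := by
    have := Set.ncard_union_le (outerBoundary G D ∩ E) (outerBoundary G D ∩ ⋃ i, Z i)
    rw [← hboundary] at this
    have := Set.ncard_le_one_iff_subsingleton.2 hE
    have := Set.ncard_le_one_iff_subsingleton.2 hZ
    omega
  have hall : ∀ i, i ∈ touchedBy G D Z := fun i => by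
    obtain ⟨w, hw⟩ := nonempty_of_connected_induce (hsplit.model.connected i)
    have hwcover : w ∈ D ∪ outerBoundary G D := hconn D hvD hcard ▸ Set.mem_univ w
    obtain ⟨-, u, hu, huw⟩ :=
      hwcover.resolve_left fun hwD => Set.disjoint_left.1 (hsplit.disjoint_left i) hwD hw
    exact ⟨u, hu, w, hw, huw⟩
  exact absurd (hD (hall 0) (hall 1)) (by decide)

end K5

/-! ### A `K₃,₃` model through a given vertex -/

section K33

variable {V ι κ : Type*} {G : SimpleGraph V} {R : ι → κ → Prop} {v : V}

/-- The vertex `v` lies in none of the branch sets `X i` and `Y j`. -/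
def Avoids (v : V) (X : ι → Set V) (Y : κ → Set V) : Prop := (∀ i, v ∉ X i) ∧ ∀ j, v ∉ Y j

lemma IsBipModel.update_right [DecidableEq κ] {X : ι → Set V} {Y : κ → Set V}
    {R' : ι → κ → Prop} (h : IsBipModel G R X Y) {j₀ : κ} {S : Set V}
    (hS : (G.induce S).Connected) (hX : ∀ i, Disjoint S (X i)) (hY : ∀ j ≠ j₀, Disjoint S (Y j))
    (hR : ∀ j ≠ j₀, ∀ i, R' i j → R i j) (ht : ∀ i, R' i j₀ → Touches G S (X i)) :
    IsBipModel G R' X (Function.update Y j₀ S) :=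
  (h.swap.update_left hS hY hX hR ht).swap

variable {X Y : Fin 3 → Set V} {K : Set V} {i₀ j₀ : Fin 3}

lemma IsBipModel.exists_spokes (h : IsBipModel G (fun _ _ => True) X Y) (hv : v ∈ X i₀)
    (hK : ∀ K, IsComp G (X i₀ \ {v}) K → (touchedBy G K Y).Subsingleton) :
    ∃ (X' : Fin 2 → Set V) (Y' : Fin 3 → Set V), IsBipModel G (fun _ _ => True) X' Y' ∧
      Avoids v X' Y' ∧ ∀ j, Touches G (Y' j) {v} := by
  obtain ⟨Y', hsub, hsup, hconn, hdisj, htouch⟩ := exists_disjoint_routes (h.connected_left i₀) hv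
    h.connected_right h.disjoint_right (h.disjoint i₀) (fun j => h.touches trivial) hK
  refine ⟨X ∘ i₀.succAbove, Y', ⟨fun i => h.connected_left _, hconn,
    fun i i' hne => h.disjoint_left (i₀.succAbove_right_injective.ne hne), hdisj, fun i j => ?_,
    fun i j _ => (h.touches trivial).mono subset_rfl (hsub j)⟩, ⟨fun i hi => ?_, fun j hj => ?_⟩,
    htouch⟩
  · exact ((h.disjoint _ j).union_right ((h.disjoint_left (i₀.succAbove_ne i)).mono_right
      Set.sdiff_subset)).mono_right (hsup j)
  · exact Set.disjoint_left.1 (h.disjoint_left (i₀.succAbove_ne i)) hi hv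
  · obtain hj | hj := hsup j hj
    exacts [Set.disjoint_left.1 (h.disjoint i₀ j) hv hj, hj.2 rfl]

lemma exists_route_disjoint {X Y : Set V} (hX : (G.induce X).Connected) (hv : v ∈ X)
    (hY : (G.induce Y).Connected) (hXY : Touches G X Y) (hdisj : Disjoint X Y)
    (hK : IsComp G (X \ {v}) K) (hKY : ¬ Touches G K Y) :
    ∃ Y', Y ⊆ Y' ∧ Y' ⊆ Y ∪ X \ {v} ∧ (G.induce Y').Connected ∧ Touches G Y' {v} ∧
      Disjoint K Y' := by
  have hKY' : Disjoint K Y := hdisj.mono_left fun u hu => (hK.subset hu).1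
  obtain ⟨Y', hsub, hconn, htouch, rfl | ⟨L, hL, hLY, rfl⟩⟩ := exists_route hX hv hY hXY
  · exact ⟨Y', hsub, Set.subset_union_left, hconn, htouch, hKY'⟩
  · exact ⟨Y ∪ L, hsub, Set.union_subset_union_right Y hL.subset, hconn, htouch, hKY'.union_right
      ((hK.eq_or_disjoint hL).resolve_left fun e => hKY (e ▸ hLY))⟩

lemma IsBipModel.exists_missing_edge (h : IsBipModel G (fun _ _ => True) X Y) (hv : v ∈ X i₀)
    (hK : IsComp G (X i₀ \ {v}) K) (hj₀ : ¬ Touches G K (Y j₀))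
    (ht : ∀ j ≠ j₀, Touches G K (Y j)) :
    ∃ X' Y' : Fin 3 → Set V, IsBipModel G (fun i j => ¬ (i = i₀ ∧ j = j₀)) X' Y' ∧
      Avoids v X' Y' ∧ Touches G (X' i₀) {v} ∧ Touches G (Y' j₀) {v} := by
  have hvY : ∀ j, v ∉ Y j := fun j => Set.disjoint_left.1 (h.disjoint i₀ j) hv
  have hvX : ∀ i ≠ i₀, v ∉ X i := fun i hi => Set.disjoint_left.1 (h.disjoint_left hi.symm) hv
  have hKX : K ⊆ X i₀ := fun u hu => (hK.subset hu).1
  obtain ⟨Y', hsub, hsup, hconn, htouch, hKY'⟩ := exists_route_disjoint (h.connected_left i₀) hv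
    (h.connected_right j₀) (h.touches trivial) (h.disjoint i₀ j₀) hK hj₀
  have hXY' : ∀ i ≠ i₀, Disjoint Y' (X i) := fun i hi =>
    ((h.disjoint i j₀).symm.union_left ((h.disjoint_left hi.symm).mono_left
      Set.sdiff_subset)).mono_left hsup
  have hYY' : ∀ j ≠ j₀, Disjoint Y' (Y j) := fun j hj =>
    ((h.disjoint_right hj.symm).union_left ((h.disjoint i₀ j).mono_left
      Set.sdiff_subset)).mono_left hsup
  have hmodel : IsBipModel G (fun i j => ¬ (i = i₀ ∧ j = j₀)) (Function.update X i₀ K) Y :=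
    h.update_left hK.connected (fun i hi => (h.disjoint_left hi.symm).mono_left hKX)
      (fun j => (h.disjoint i₀ j).mono_left hKX) (fun _ _ _ _ => trivial)
      fun j hj => ht j fun e => hj ⟨rfl, e⟩
  refine ⟨_, _, hmodel.update_right (j₀ := j₀) hconn ?_ hYY' (fun _ _ _ => id) ?_, ⟨?_, ?_⟩, ?_, ?_⟩
  · exact (Function.forall_update_iff X fun _ T => Disjoint Y' T).2 ⟨hKY'.symm, hXY'⟩
  · refine fun i hi => ?_
    have hi₀ : i ≠ i₀ := fun e => hi ⟨e, rfl⟩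
    rw [Function.update_of_ne hi₀]
    exact ((h.touches trivial).mono subset_rfl hsub).symm
  · exact (Function.forall_update_iff X fun _ T => v ∉ T).2
      ⟨fun hvK => (hK.subset hvK).2 rfl, hvX⟩
  · exact (Function.forall_update_iff Y fun _ T => v ∉ T).2
      ⟨fun hvY' => (hsup hvY').elim (hvY j₀) fun hvX => hvX.2 rfl, fun j _ => hvY j⟩
  · rw [Function.update_self]
    exact hK.touches_singleton (h.connected_left i₀) hv
  · rwa [Function.update_self]

/-- The three ways in which a `K₃,₃` model of `G` survives the deletion of `v`: as a whole, without
one edge whose ends are adjacent to `v`, or as a `K₂,₃` model whose larger side is adjacent to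
`v`. -/
def K33Cases (G : SimpleGraph V) (v : V) : Prop :=
  (∃ X Y : Fin 3 → Set V, IsBipModel G (fun _ _ => True) X Y ∧ Avoids v X Y) ∨
  (∃ (i₀ j₀ : Fin 3) (X Y : Fin 3 → Set V), IsBipModel G (fun i j => ¬ (i = i₀ ∧ j = j₀)) X Y ∧
    Avoids v X Y ∧ Touches G (X i₀) {v} ∧ Touches G (Y j₀) {v}) ∨
  ∃ (X : Fin 2 → Set V) (Y : Fin 3 → Set V), IsBipModel G (fun _ _ => True) X Y ∧ Avoids v X Y ∧
    ∀ j, Touches G (Y j) {v}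

lemma IsBipModel.k33Cases_of_mem (h : IsBipModel G (fun _ _ => True) X Y) (hv : v ∈ X i₀) :
    K33Cases G v := by
  by_cases hroutes : ∀ K, IsComp G (X i₀ \ {v}) K → (touchedBy G K Y).Subsingleton
  · exact .inr (.inr (h.exists_spokes hv hroutes))
  push Not at hroutes
  obtain ⟨K, hK, a, ha, b, hb, hab⟩ := hroutes
  have hKX : K ⊆ X i₀ := fun u hu => (hK.subset hu).1
  by_cases hall : ∀ j, Touches G K (Y j)
  · refine .inl ⟨_, _, h.update_left hK.connected
      (fun i hi => (h.disjoint_left hi.symm).mono_left hKX)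
      (fun j => (h.disjoint i₀ j).mono_left hKX) (fun _ _ _ => id) fun j _ => hall j, ?_, ?_⟩
    · exact (Function.forall_update_iff X fun _ T => v ∉ T).2
        ⟨fun hvK => (hK.subset hvK).2 rfl,
          fun i hi => Set.disjoint_left.1 (h.disjoint_left hi.symm) hv⟩
    · exact fun j => Set.disjoint_left.1 (h.disjoint i₀ j) hv
  · push Not at hall
    obtain ⟨j₀, hj₀⟩ := hall
    refine .inr (.inl ⟨i₀, j₀, h.exists_missing_edge hv hK hj₀ fun j hj => ?_⟩)
    have haj : a ≠ j₀ := fun e => hj₀ (e ▸ ha)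
    have hbj : b ≠ j₀ := fun e => hj₀ (e ▸ hb)
    obtain rfl | rfl : j = a ∨ j = b := by omega
    exacts [ha, hb]

lemma IsMinor.k33Cases (h : IsMinor K33 G) (v : V) : K33Cases G v := by
  obtain ⟨X, Y, hmodel⟩ := isMinor_K33_iff_exists_isBipModel.1 h
  by_cases hX : ∃ i, v ∈ X i
  · exact hmodel.k33Cases_of_mem hX.choose_spec
  by_cases hY : ∃ j, v ∈ Y j
  · exact hmodel.swap.k33Cases_of_mem hY.choose_spec
  exact .inl ⟨X, Y, hmodel, not_exists.1 hX, not_exists.1 hY⟩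

end K33

/-! ### Connectivity and separations -/

section Connectivity

variable {V : Type*} {G : SimpleGraph V} {k : ℕ} {S : Set V} {v : V}

lemma KConnected.connected (h : KConnected G k) (hk : 0 < k) : G.Connected := by
  have hconn := h.2 ∅ (by rwa [Set.ncard_empty])
  rw [Set.compl_empty] at hconn
  exact (induceUnivIso G).connected_iff.1 hconn

lemma KConnected.union_outerBoundary (h : KConnected G k) (hS : S.Nonempty)
    (hcard : (outerBoundary G S).ncard < k) : S ∪ outerBoundary G S = Set.univ := by
  by_contra hne
  have hSsub : S ⊆ (outerBoundary G S)ᶜ := fun u hu huS => huS.1 hu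
  obtain ⟨u, hu, w, ⟨hw, hwS⟩, huw⟩ := touches_diff_of_connected (h.2 _ hcard) hSsub hS
    fun e => hne (compl_eq_iff_isCompl.1 e.symm).symm.sup_eq_top
  exact hw ⟨hwS, u, hu, huw⟩

lemma KConnected.le_ncard_neighborSet (h : KConnected G k) (v : V) :
    k ≤ (G.neighborSet v).ncard := by
  have hboundary : outerBoundary G {v} = G.neighborSet v := by
    ext w
    simp only [outerBoundary, Set.mem_singleton_iff, exists_eq_left, Set.mem_ofPred_eq,
      mem_neighborSet, and_iff_right_iff_imp]
    exact fun hw => hw.ne'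
  by_contra! hlt
  have hcover := h.union_outerBoundary (Set.singleton_nonempty v) (hboundary ▸ hlt)
  have hcard := Set.ncard_union_le {v} (outerBoundary G {v})
  rw [hcover, Set.ncard_univ, Set.ncard_singleton, hboundary] at hcard
  have := h.1
  omega

end Connectivity

section Separation

variable {V ι κ : Type*} {G : SimpleGraph V} {k : ℕ} {A B S : Set V} {u w : V}

lemma IsSep.mem_right_of_adj (h : IsSep G k A B) (hu : u ∉ A) (huw : G.Adj u w) : w ∈ B :=
  (h.2.2.2.2 huw).elim (fun h => absurd h.1 hu) And.right

lemma IsSep.mem_left_of_adj (h : IsSep G k A B) (hu : u ∉ B) (huw : G.Adj u w) : w ∈ A :=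
  (h.2.2.2.2 huw).elim And.right fun h => absurd h.1 hu

lemma IsSep.mem_right (h : IsSep G k A B) (hu : u ∉ A) : u ∈ B :=
  (h.1.symm ▸ Set.mem_univ u : u ∈ A ∪ B).resolve_left hu

lemma sepY_adj_none {a : A} : (sepY G A B).Adj none (some a) ↔ a.1 ∈ B := by
  simp [sepY, fromRel_adj]

lemma sepY_adj_some {a b : A} : (sepY G A B).Adj (some a) (some b) ↔ G.Adj a b := by
  simp only [sepY, fromRel_adj, G.adj_comm b, or_self, ne_eq, Option.some.injEq,
    and_iff_right_iff_imp]
  exact fun h e => G.irrefl (e ▸ h)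

/-- The vertices of `G` in the vertex set `U` of `sepY G A B`, the new vertex being dropped. -/
def underlying (U : Set (Option A)) : Set V := Subtype.val '' (some ⁻¹' U)

lemma mem_underlying {U : Set (Option A)} {x : V} :
    x ∈ underlying U ↔ ∃ h : x ∈ A, some ⟨x, h⟩ ∈ U := by
  simp [underlying]

lemma underlying_subset (U : Set (Option A)) : underlying U ⊆ A := Subtype.coe_image_subset A _

lemma ncard_underlying {U : Set (Option A)} (hU : none ∉ U) :
    (underlying U).ncard = U.ncard := by
  rw [underlying, Set.ncard_image_of_injective _ Subtype.val_injective,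
    Set.ncard_preimage_of_injective_subset_range (Option.some_injective A)]
  rintro (_ | a) ha
  exacts [absurd ha hU, ⟨a, rfl⟩]

lemma disjoint_underlying {U W : Set (Option A)} (h : Disjoint U W) :
    Disjoint (underlying U) (underlying W) :=
  (Set.disjoint_image_iff Subtype.val_injective).2 (h.preimage some)

lemma connected_induce_underlying {U : Set (Option A)} (hU : none ∉ U)
    (h : ((sepY G A B).induce U).Connected) : (G.induce (underlying U)).Connected := by
  have hsome : ∀ u : U, ∃ a : A, some a = u.1 := fun u =>
    Option.ne_none_iff_exists.1 fun e => hU (e ▸ u.2)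
  choose a ha using hsome
  let f : (sepY G A B).induce U →g G.induce (underlying U) :=
    { toFun := fun u => ⟨a u, Set.mem_image_of_mem _ ((ha u).symm ▸ u.2 : some (a u) ∈ U)⟩
      map_rel' := fun {u w} huw => by
        rw [comap_adj, Function.Embedding.subtype_apply, Function.Embedding.subtype_apply, ← ha u,
          ← ha w] at huw
        exact sepY_adj_some.1 huw }
  refine h.map f ?_
  rintro ⟨_, b, hb, rfl⟩
  have hab : a ⟨some b, hb⟩ = b := Option.some_injective A (ha _)
  exact ⟨⟨some b, hb⟩, Subtype.ext (congrArg (fun c : A => c.1) hab)⟩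

lemma Touches.underlying {U W : Set (Option A)} (hU : none ∉ U) (hW : none ∉ W)
    (h : Touches (sepY G A B) U W) : Touches G (underlying U) (underlying W) := by
  obtain ⟨_ | a, ha, _ | b, hb, hab⟩ := h
  · exact absurd ha hU
  · exact absurd ha hU
  · exact absurd hb hW
  · exact ⟨a, Set.mem_image_of_mem _ ha, b, Set.mem_image_of_mem _ hb, sepY_adj_some.1 hab⟩

lemma exists_mem_underlying_of_touches {U : Set (Option A)}
    (h : Touches (sepY G A B) U {none}) : ∃ x ∈ underlying U, x ∈ A ∩ B := by
  obtain ⟨_ | a, ha, hadj⟩ := touches_singleton.1 h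
  · exact absurd hadj ((sepY G A B).irrefl)
  · exact ⟨a, Set.mem_image_of_mem _ ha, a.2, sepY_adj_none.1 hadj.symm⟩

lemma IsBipModel.underlying {R : ι → κ → Prop} {X : ι → Set (Option A)}
    {Y : κ → Set (Option A)} (h : IsBipModel (sepY G A B) R X Y) (hnone : Avoids none X Y) :
    IsBipModel G R (fun i => underlying (X i)) (fun j => underlying (Y j)) where
  connected_left i := connected_induce_underlying (hnone.1 i) (h.connected_left i)
  connected_right j := connected_induce_underlying (hnone.2 j) (h.connected_right j)
  disjoint_left _ _ hne := disjoint_underlying (h.disjoint_left hne)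
  disjoint_right _ _ hne := disjoint_underlying (h.disjoint_right hne)
  disjoint i j := disjoint_underlying (h.disjoint i j)
  touches i j hij := (h.touches hij).underlying (hnone.1 i) (hnone.2 j)

lemma IsSep.ncard_neighborSet_sepY_none (h : IsSep G k A B) :
    ((sepY G A B).neighborSet none).ncard = k := by
  rw [← h.2.2.2.1, ← ncard_underlying ((sepY G A B).irrefl)]
  congr 1
  ext x
  simp only [mem_underlying, mem_neighborSet, sepY_adj_none, exists_prop, Set.mem_inter_iff]

lemma IsSep.kConnectedAt_sepY_none [Finite V] (h : IsSep G k A B) (hG : KConnected G k) :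
    KConnectedAt (sepY G A B) k none := by
  intro S hS hcard
  by_contra hne
  obtain ⟨t, ht⟩ := (Set.ne_univ_iff_exists_notMem _).1 hne
  obtain ⟨a, rfl⟩ := Option.ne_none_iff_exists'.1 fun e : t = none => ht (.inl (e ▸ hS))
  let U := S ∪ outerBoundary (sepY G A B) S
  have hmemB : ∀ {b : A}, b.1 ∈ B → some b ∈ U := fun {b} hb => or_iff_not_imp_left.2 fun hbS =>
    ⟨hbS, none, hS, sepY_adj_none.2 hb⟩
  have hboundary : outerBoundary G (underlying Uᶜ) ⊆
      underlying (outerBoundary (sepY G A B) S) := by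
    rintro w ⟨hw, -, ⟨b, hb, rfl⟩, hbw⟩
    have hwA : w ∈ A := h.mem_left_of_adj (fun hbB => hb (hmemB hbB)) hbw
    have hwU : some ⟨w, hwA⟩ ∈ U := by
      by_contra hwU
      exact hw (mem_underlying.2 ⟨hwA, hwU⟩)
    refine mem_underlying.2 ⟨hwA, hwU.resolve_left fun hwS => hb (.inr ?_)⟩
    exact ⟨fun hbS => hb (.inl hbS), _, hwS, sepY_adj_some.2 hbw.symm⟩
  have hcover := hG.union_outerBoundary (S := underlying Uᶜ) ⟨a, a, ht, rfl⟩ <|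
    (Set.ncard_le_ncard hboundary).trans_lt <| by rwa [ncard_underlying fun hn => hn.1 hS]
  refine h.2.1 (Set.eq_univ_of_univ_subset ?_)
  rw [← hcover]
  exact Set.union_subset (underlying_subset _) (hboundary.trans (underlying_subset _))

lemma IsSep.isMinor_K33_of_not_planar_sepY [Finite V] (h : IsSep G 3 A B) (hG : KConnected G 3)
    (hY : ¬ Planar (sepY G A B)) : IsMinor K33 (sepY G A B) := by
  by_contra hK
  exact hY ⟨fun h5 => hK (isMinor_K33_of_isMinor_K5 (h.kConnectedAt_sepY_none hG)
    h.ncard_neighborSet_sepY_none.le h5), hK⟩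

end Separation

/-! ### Models of `K₃,₃⁺` and `K₃,₃ʰ` -/

section Models

variable {V W ι κ : Type*} {G : SimpleGraph V}

lemma IsModel.of_fromRel {r : W → W → Prop} {B : W → Set V}
    (hconn : ∀ w, (G.induce (B w)).Connected)
    (hdisj : Pairwise fun w₁ w₂ => Disjoint (B w₁) (B w₂))
    (ht : ∀ w₁ w₂, w₁ ≠ w₂ → r w₁ w₂ → Touches G (B w₁) (B w₂)) : IsModel (fromRel r) G B where
  connected := hconn
  disjoint := hdisj
  touches w₁ w₂ h := (fromRel_adj r w₁ w₂).1 h |>.2.elim (ht w₁ w₂ h.ne)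
    fun hr => (ht w₂ w₁ h.ne' hr).symm

lemma pairwise_disjoint_sumElim {X : ι → Set V} {Y : κ → Set V}
    (hX : Pairwise fun i i' => Disjoint (X i) (X i'))
    (hY : Pairwise fun j j' => Disjoint (Y j) (Y j')) (hXY : ∀ i j, Disjoint (X i) (Y j)) :
    Pairwise fun w₁ w₂ => Disjoint (Sum.elim X Y w₁) (Sum.elim X Y w₂) := by
  rintro (i | j) (i' | j') hne
  exacts [hX fun e => hne (e ▸ rfl), hXY i j', (hXY i' j).symm, hY fun e => hne (e ▸ rfl)]

lemma IsBipModel.cons {n : ℕ} {R : Fin n → κ → Prop} {R' : Fin (n + 1) → κ → Prop}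
    {X : Fin n → Set V} {Y : κ → Set V} (h : IsBipModel G R X Y) {S : Set V}
    (hS : (G.induce S).Connected) (hX : ∀ i, Disjoint S (X i)) (hY : ∀ j, Disjoint S (Y j))
    (hR : ∀ i j, R' i.succ j → R i j) (ht : ∀ j, R' 0 j → Touches G S (Y j)) :
    IsBipModel G R' (Fin.cons S X : Fin (n + 1) → Set V) Y where
  connected_left := Fin.cases hS h.connected_left
  connected_right := h.connected_right
  disjoint_left := by
    refine Fin.cases (Fin.cases (fun hne => absurd rfl hne) fun i _ => hX i) fun i =>
      Fin.cases (fun _ => (hX i).symm) fun i' hne => ?_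
    exact h.disjoint_left fun e => hne (congrArg Fin.succ e)
  disjoint_right := h.disjoint_right
  disjoint := Fin.cases hY h.disjoint
  touches := Fin.cases ht fun i j hij => h.touches (hR i j hij)

variable {X Y : Fin 3 → Set V} {P : Fin 2 → Set V} {K : Set V} {c : V}

lemma IsBipModel.isMinor_K33plus_of_touches (h : IsBipModel G (fun _ _ => True) X Y)
    (hK : (G.induce K).Connected) (hX : ∀ i, Disjoint K (X i)) (hY : ∀ j, Disjoint K (Y j))
    {i₀ : Fin 3} (ht : Touches G K (X i₀)) : IsMinor K33plus G := by
  have h' := h.comp (Equiv.swap 0 i₀).injective Function.injective_id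
  refine isMinor_iff_exists_isModel.2
    ⟨fun w => w.elim K (Sum.elim (X ∘ Equiv.swap 0 i₀) (Y ∘ id)), .of_fromRel ?_ ?_ ?_⟩
  · rintro (_ | i | j)
    exacts [hK, h'.connected_left i, h'.connected_right j]
  · have hdisj := pairwise_disjoint_sumElim h'.disjoint_left h'.disjoint_right h'.disjoint
    have hKdisj : ∀ w, Disjoint K (Sum.elim (X ∘ Equiv.swap 0 i₀) (Y ∘ id) w) :=
      Sum.forall.2 ⟨fun i => hX _, hY⟩
    rintro (_ | w₁) (_ | w₂) hne
    exacts [absurd rfl hne, hKdisj w₂, (hKdisj w₁).symm, hdisj fun e => hne (e ▸ rfl)]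
  · rintro (_ | i | j) (_ | i' | j') - hr
    · exact hr.elim
    · obtain rfl : i' = 0 := Sum.inl_injective hr
      simpa using ht
    · cases hr
    · exact hr.elim
    · exact hr.elim
    · exact h'.touches trivial
    all_goals exact hr.elim

lemma IsBipModel.isMinor_K33plus (h : IsBipModel G (fun _ _ => True) X Y) (hG : G.Connected)
    (hc : Avoids c X Y) : IsMinor K33plus G := by
  obtain ⟨K, hK, hcK⟩ := exists_isComp_mem (G := G) (X := ((⋃ i, X i) ∪ ⋃ j, Y j)ᶜ) (a := c)
    (by simpa only [Set.mem_compl_iff, Set.mem_union, Set.mem_iUnion, not_or, not_exists, Avoids]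
      using hc)
  have hKX : ∀ i, Disjoint K (X i) := fun i => Set.disjoint_left.2 fun u hu hui =>
    hK.subset hu (.inl (Set.mem_iUnion_of_mem i hui))
  have hKY : ∀ j, Disjoint K (Y j) := fun j => Set.disjoint_left.2 fun u hu huj =>
    hK.subset hu (.inr (Set.mem_iUnion_of_mem j huj))
  obtain ⟨x, hx⟩ := nonempty_of_connected_induce (h.connected_left 0)
  obtain ⟨u, hu, w, ⟨-, hw⟩, huw⟩ := touches_diff_of_connected (G := G) (C := Set.univ)
    ((induceUnivIso G).connected_iff.2 hG) (Set.subset_univ K) ⟨c, hcK⟩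
    fun e => Set.disjoint_left.1 (hKX 0) (e ▸ Set.mem_univ x) hx
  have hwmodel : w ∈ (⋃ i, X i) ∪ ⋃ j, Y j := by
    by_contra hwmodel
    exact hw (hK.closed hu hwmodel huw)
  simp only [Set.mem_union, Set.mem_iUnion] at hwmodel
  obtain ⟨i, hi⟩ | ⟨j, hj⟩ := hwmodel
  · exact h.isMinor_K33plus_of_touches hK.connected hKX hKY ⟨u, hu, w, hi, huw⟩
  · exact h.swap.isMinor_K33plus_of_touches hK.connected hKY hKX ⟨u, hu, w, hj, huw⟩

lemma IsBipModel.isMinor_K33h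
    (h : IsBipModel G (fun i j : Fin 3 => ¬ (i = 0 ∧ (j = 0 ∨ j = 1))) X Y)
    (hP : ∀ k, (G.induce (P k)).Connected) (hPP : Disjoint (P 0) (P 1))
    (hXP : ∀ i k, Disjoint (X i) (P k)) (hYP : ∀ j k, Disjoint (Y j) (P k))
    (htP : Touches G (P 0) (P 1)) (htX : ∀ k, Touches G (X 0) (P k)) (htY₀ : Touches G (Y 0) (P 0))
    (htY₁ : Touches G (Y 1) (P 1)) : IsMinor K33h G := by
  refine isMinor_iff_exists_isModel.2
    ⟨Sum.elim (Sum.elim X Y) P, .of_fromRel ?_ (pairwise_disjoint_sumElim ?_ ?_ ?_) ?_⟩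
  · rintro ((i | j) | k)
    exacts [h.connected_left i, h.connected_right j, hP k]
  · exact pairwise_disjoint_sumElim h.disjoint_left h.disjoint_right h.disjoint
  · simp [Pairwise, Fin.forall_fin_succ, hPP, hPP.symm]
  · exact Sum.forall.2 ⟨hXP, hYP⟩
  · rintro ((i | j) | k) ((i' | j') | k') hne hr
    · exact hr.elim
    · exact h.touches hr
    · obtain ⟨rfl, hi⟩ | ⟨rfl, hi⟩ := hr
      · obtain rfl : i = 0 := by simpa using hi
        exact htX 0
      · obtain rfl : i = 0 := by simpa using hi
        exact htX 1
    · exact (h.touches hr).symm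
    · exact hr.elim
    · obtain ⟨rfl, hj⟩ | ⟨rfl, hj⟩ := hr
      · obtain rfl : j = 0 := by simpa using hj
        exact htY₀
      · obtain rfl : j = 1 := by simpa using hj
        exact htY₁
    · exact hr.elim
    · exact hr.elim
    · fin_cases k <;> fin_cases k'
      exacts [absurd rfl hne, htP, htP.symm, absurd rfl hne]

end Models

/-! ### Minimal connectors -/

section Connectors

variable {V : Type*} {G : SimpleGraph V} {k : ℕ} {A B C D N S T : Set V} {x y z : V}

/-- The vertex set `S` links the vertices of `T`: it is connected and adjacent to each of them. Only
connectors disjoint from `T` matter; the minimal ones of a pair are interiors of induced paths. -/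
def IsConnector (G : SimpleGraph V) (T S : Set V) : Prop :=
  (G.induce S).Connected ∧ ∀ x ∈ T, Touches G S {x}

lemma IsSep.exists_isConnector [Finite V] (h : IsSep G k A B) (hG : KConnected G k) :
    ∃ K ⊆ Aᶜ, IsConnector G (A ∩ B) K := by
  obtain ⟨c, hc⟩ := (Set.ne_univ_iff_exists_notMem A).1 h.2.1
  obtain ⟨K, hK, hcK⟩ := exists_isComp_mem (G := G) (X := Aᶜ) hc
  refine ⟨K, hK.subset, hK.connected, fun x hx => ?_⟩
  by_contra hKx
  have hboundary : outerBoundary G K ⊆ A ∩ B := by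
    rintro w ⟨hwK, u, hu, huw⟩
    refine ⟨?_, h.mem_right_of_adj (hK.subset hu) huw⟩
    by_contra hwA
    exact hwK (hK.closed hu hwA huw)
  have hxK : x ∉ outerBoundary G K := fun hw => hKx (touches_singleton.2 hw.2)
  have hcover := hG.union_outerBoundary ⟨c, hcK⟩ <| h.2.2.2.1 ▸
    Set.ncard_lt_ncard (hboundary.ssubset_of_mem_notMem hx hxK)
  exact (hcover.symm ▸ Set.mem_univ x : x ∈ K ∪ outerBoundary G K).elim
    (fun hxK' => hK.subset hxK' hx.1) hxK

lemma IsSep.minimal_isConnector [Finite V] (h : IsSep G k A B) (hG : KConnected G k)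
    (hT : T ⊆ A ∩ B) (hmin : ∀ S ⊆ Aᶜ, IsConnector G T S → S = Aᶜ) :
    Minimal (IsConnector G T) Aᶜ := by
  obtain ⟨K, hKA, hK, htK⟩ := h.exists_isConnector hG
  have hKT : IsConnector G T K := ⟨hK, fun x hx => htK x (hT hx)⟩
  exact ⟨hmin K hKA hKT ▸ hKT, fun S hS hSA => (hmin S hSA hS).ge⟩

lemma exists_unique_neighbor_of_minimal_isConnector [Finite V]
    (hmin : Minimal (IsConnector G T) C) (hx : ¬ Minimal (IsConnector G (T \ {x})) C) :
    ∃ c ∈ C, IsConnector G (T \ {x}) (C \ {c}) ∧ ∀ u ∈ C, G.Adj u x → u = c := by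
  have hC : IsConnector G (T \ {x}) C := ⟨hmin.prop.1, fun y hy => hmin.prop.2 y hy.1⟩
  obtain ⟨S, hSC, hS⟩ := exists_lt_of_not_minimal hC hx
  obtain ⟨c, hcC, hcS, hconn⟩ := exists_connected_diff_singleton hC.1 hS.1 hSC
  have htouch : IsConnector G (T \ {x}) (C \ {c}) := ⟨hconn, fun y hy =>
    (hS.2 y hy).mono (Set.subset_sdiff_singleton hSC.subset hcS) subset_rfl⟩
  refine ⟨c, hcC, htouch, fun u hu hux => ?_⟩
  by_contra huc
  refine (hmin.le_of_le (y := C \ {c}) ⟨hconn, fun y hy => ?_⟩ Set.sdiff_subset hcC).2 rfl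
  obtain rfl | hyx := eq_or_ne y x
  exacts [touches_singleton.2 ⟨u, ⟨hu, huc⟩, hux⟩, htouch.2 y ⟨hy, hyx⟩]

lemma exists_split_of_minimal_isConnector (hmin : Minimal (IsConnector G {y, z}) S)
    (hN : (S ∩ N).Nontrivial) : ∃ P Q, P ∪ Q = S ∧ Disjoint P Q ∧ (G.induce P).Connected ∧
      (G.induce Q).Connected ∧ Touches G P Q ∧ Touches G P {y} ∧ Touches G Q {z} ∧
      (P ∩ N).Nonempty ∧ (Q ∩ N).Nonempty := by
  obtain ⟨p, ⟨hpS, hpN⟩, q, ⟨hqS, hqN⟩, hpq⟩ := hN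
  obtain ⟨P, Q, hPQ, hdisj, hP, hQ, htPQ, hpP, hqQ⟩ :=
    exists_connected_split hmin.prop.1 hpS hqS hpq
  have hnotP : ¬ (Touches G P {y} ∧ Touches G P {z}) := fun ht => by
    have hSP := hmin.le_of_le (y := P) ⟨hP, by simpa using ht⟩ (hPQ ▸ Set.subset_union_left)
    exact Set.disjoint_left.1 hdisj (hSP hqS) hqQ
  have hnotQ : ¬ (Touches G Q {y} ∧ Touches G Q {z}) := fun ht => by
    have hSQ := hmin.le_of_le (y := Q) ⟨hQ, by simpa using ht⟩ (hPQ ▸ Set.subset_union_right)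
    exact Set.disjoint_left.1 hdisj hpP (hSQ hpS)
  have hy : Touches G P {y} ∨ Touches G Q {y} :=
    touches_union_left.1 (hPQ ▸ hmin.prop.2 y (by simp))
  have hz : Touches G P {z} ∨ Touches G Q {z} :=
    touches_union_left.1 (hPQ ▸ hmin.prop.2 z (by simp))
  obtain ⟨hPy, hQz⟩ | ⟨hPz, hQy⟩ :
      (Touches G P {y} ∧ Touches G Q {z}) ∨ (Touches G P {z} ∧ Touches G Q {y}) := by tauto
  · exact ⟨P, Q, hPQ, hdisj, hP, hQ, htPQ, hPy, hQz, ⟨p, hpP, hpN⟩, q, hqQ, hqN⟩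
  · exact ⟨Q, P, Set.union_comm P Q ▸ hPQ, hdisj.symm, hQ, hP, htPQ.symm, hQy, hPz,
      ⟨q, hqQ, hqN⟩, p, hpP, hpN⟩

/-- `G[C]` has a triangle minor whose `i`-th branch set is adjacent to the root `r i`. -/
def HasRootedTriangle (G : SimpleGraph V) (C : Set V) (r : Fin 3 → V) : Prop :=
  ∃ T : Fin 3 → Set V, IsModel (⊤ : SimpleGraph (Fin 3)) G T ∧
    ∀ i, T i ⊆ C ∧ Touches G (T i) {r i}

variable {r : Fin 3 → V}

lemma hasRootedTriangle_of_minimal_isConnector (hD : (G.induce D).Connected) (hDC : D ⊆ C)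
    (hr : Touches G D {r 0}) (hmin : Minimal (IsConnector G {r 1, r 2}) S) (hSC : S ⊆ C)
    (hDS : (S ∩ outerBoundary G D).Nontrivial) (hdisj : Disjoint D S) :
    HasRootedTriangle G C r := by
  obtain ⟨P, Q, rfl, hPQ, hP, hQ, htPQ, hPy, hQz, ⟨p, hpP, -, hp⟩, q, hqQ, -, hq⟩ :=
    exists_split_of_minimal_isConnector hmin hDS
  obtain ⟨hDP, hDQ⟩ := Set.disjoint_union_right.1 hdisj
  have htDP : Touches G D P := hp.imp fun u hu => ⟨hu.1, p, hpP, hu.2⟩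
  have htDQ : Touches G D Q := hq.imp fun u hu => ⟨hu.1, q, hqQ, hu.2⟩
  refine ⟨![D, P, Q], ⟨?_, ?_, ?_⟩, ?_⟩
  · simp [Fin.forall_fin_succ, hD, hP, hQ]
  · simp [Pairwise, Fin.forall_fin_succ, hPQ, hPQ.symm, hDP, hDP.symm, hDQ, hDQ.symm]
  · simp [Fin.forall_fin_succ, htPQ, htPQ.symm, htDP, htDP.symm, htDQ, htDQ.symm]
  · simp [Fin.forall_fin_succ, hDC, hr, hPy, hQz, Set.union_subset_iff.1 hSC]

lemma IsSep.nontrivial_inter_outerBoundary [Finite V] (h : IsSep G 3 A B) (hG : KConnected G 3)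
    (hD : IsComp G (Aᶜ \ S) D) (hyx : y ≠ x) (hy : y ∈ A ∩ B)
    (hDx : ∀ y ∈ A ∩ B, y ≠ x → ¬ Touches G D {y}) : (S ∩ outerBoundary G D).Nontrivial := by
  have hDA : D ⊆ Aᶜ := fun u hu => (hD.subset hu).1
  have hsub : outerBoundary G D ⊆ insert x (S ∩ outerBoundary G D) := by
    intro w hw
    have ⟨hwD, u, hu, huw⟩ := hw
    by_cases hwA : w ∈ A
    · refine .inl (by_contra fun hwx => ?_)
      exact hDx w ⟨hwA, h.mem_right_of_adj (hDA hu) huw⟩ hwx (touches_singleton.2 ⟨u, hu, huw⟩)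
    · exact .inr ⟨by_contra fun hwS => hwD (hD.closed hu ⟨hwA, hwS⟩ huw), hw⟩
  have hcard : 3 ≤ (outerBoundary G D).ncard := by
    by_contra! hlt
    have hcover := hG.union_outerBoundary (nonempty_of_connected_induce hD.connected) hlt
    exact (hcover.symm ▸ Set.mem_univ y : y ∈ D ∪ outerBoundary G D).elim
      (fun hyD => hDA hyD hy.1) fun hyD => hDx y hy hyx (touches_singleton.2 hyD.2)
  have := Set.ncard_le_ncard hsub
  have := Set.ncard_insert_le x (S ∩ outerBoundary G D)
  exact Set.one_lt_ncard_iff_nontrivial.1 (by omega)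

lemma IsSep.exists_minimal_isConnector_diff [Finite V] (h : IsSep G 3 A B) (hG : KConnected G 3)
    (hinj : Function.Injective r) (hr : Set.range r = A ∩ B)
    (hmin : Minimal (IsConnector G (A ∩ B)) Aᶜ) (htri : ¬ HasRootedTriangle G Aᶜ r) :
    ∃ z ∈ A ∩ B, Minimal (IsConnector G ((A ∩ B) \ {z})) Aᶜ := by
  have hrmem : ∀ i, r i ∈ A ∩ B := fun i => hr ▸ Set.mem_range_self i
  by_contra! hall
  -- Each root `r i` then has a single neighbour `c i` in `Aᶜ`. A minimal `S` linking `r 1` to `r 2`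
  -- contains `c 1` and `c 2`, so the component of `Aᶜ \ S` at `c 0` sees no root but `r 0`, and
  -- 3-connectivity gives it two neighbours in `S`.
  choose c hcC hc hunique using fun i =>
    exists_unique_neighbor_of_minimal_isConnector hmin (hall (r i) (hrmem i))
  have hroots : (A ∩ B) \ {r 0} = {r 1, r 2} := by
    ext x
    simp only [← hr, Set.mem_sdiff, Set.mem_range, Fin.exists_fin_succ, Set.mem_insert_iff,
      Set.mem_singleton_iff]
    grind [hinj.eq_iff]
  obtain ⟨S, hSc, hS⟩ := (Set.toFinite {S | IsConnector G {r 1, r 2} S}).exists_le_minimal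
    (a := Aᶜ \ {c 0}) (hroots ▸ hc 0)
  have hSA : S ⊆ Aᶜ := fun u hu => (hSc hu).1
  have hcS : ∀ i ≠ 0, c i ∈ S := fun i hi => by
    obtain ⟨u, hu, hur⟩ := touches_singleton.1 <|
      hS.prop.2 (r i) (hroots ▸ ⟨hrmem i, hinj.ne hi⟩)
    exact hunique i u (hSA hu) hur ▸ hu
  obtain ⟨D, hD, hcD⟩ := exists_isComp_mem (G := G) (X := Aᶜ \ S) ⟨hcC 0, fun h => (hSc h).2 rfl⟩
  have hDA : D ⊆ Aᶜ := fun u hu => (hD.subset hu).1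
  have hDr : ∀ i ≠ 0, ¬ Touches G D {r i} := fun i hi hDi => by
    obtain ⟨u, hu, hur⟩ := touches_singleton.1 hDi
    exact (hD.subset hu).2 (hunique i u (hDA hu) hur ▸ hcS i hi)
  have hD₀ : Touches G D {r 0} := by
    obtain ⟨u, hu, hur⟩ := touches_singleton.1 (hmin.prop.2 (r 0) (hrmem 0))
    exact touches_singleton.2 ⟨c 0, hcD, hunique 0 u hu hur ▸ hur⟩
  have hboundary := h.nontrivial_inter_outerBoundary hG hD (hinj.ne one_ne_zero) (hrmem 1)
    fun y hy hyr => by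
      obtain ⟨i, rfl⟩ := hr.symm ▸ hy
      exact hDr i fun hi => hyr (congrArg r hi)
  exact htri <| hasRootedTriangle_of_minimal_isConnector hD.connected hDA hD₀ hS hSA hboundary
    (Set.disjoint_left.2 fun u hu => (hD.subset hu).2)

end Connectors

section ConnectorsOfModels

variable {V : Type*} {G : SimpleGraph V} {k : ℕ} {A B S U : Set V} {Y : Fin 3 → Set V}

lemma IsBipModel.eq_univ_of_not_isMinor_K33plus {X : Fin 3 → Set V}
    (h : IsBipModel G (fun _ _ => True) X Y) (hG : G.Connected) (hplus : ¬ IsMinor K33plus G)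
    (hX : ∀ i, X i ⊆ U) (hY : ∀ j, Y j ⊆ U) : U = Set.univ :=
  Set.eq_univ_of_forall fun _ => by_contra fun hc =>
    hplus (h.isMinor_K33plus hG ⟨fun i hi => hc (hX i hi), fun j hj => hc (hY j hj)⟩)

lemma IsBipModel.eq_compl_of_isConnector_pair {X : Fin 3 → Set V} {i₀ j₀ : Fin 3} {s t : V}
    (h : IsBipModel G (fun i j => ¬ (i = i₀ ∧ j = j₀)) X Y) (hG : G.Connected)
    (hplus : ¬ IsMinor K33plus G) (hX : ∀ i, X i ⊆ A) (hY : ∀ j, Y j ⊆ A) (hs : s ∈ X i₀)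
    (ht : t ∈ Y j₀) (hSA : S ⊆ Aᶜ) (hS : IsConnector G {s, t} S) : S = Aᶜ := by
  have hdisj : ∀ {Z : Set V}, Z ⊆ A → Disjoint S Z := fun hZ =>
    (Set.disjoint_compl_left_iff_subset.2 hZ).mono_left hSA
  have hmodel : IsBipModel G (fun _ _ => True) (Function.update X i₀ (X i₀ ∪ S)) Y := by
    refine h.update_left ?_ (fun i hi => ?_) (fun j => ?_) (fun i hi j _ hij => hi hij.1) ?_
    · exact connected_induce_union_of_touches (h.connected_left i₀) hS.1 <|
        ((hS.2 s (by simp)).mono subset_rfl (Set.singleton_subset_iff.2 hs)).symm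
    · exact (h.disjoint_left hi.symm).union_left (hdisj (hX i))
    · exact (h.disjoint i₀ j).union_left (hdisj (hY j))
    · intro j _
      obtain rfl | hj := eq_or_ne j j₀
      · exact (hS.2 t (by simp)).mono Set.subset_union_right (Set.singleton_subset_iff.2 ht)
      · exact (h.touches fun hij => hj hij.2).mono Set.subset_union_left subset_rfl
  have hcover : A ∪ S = Set.univ := hmodel.eq_univ_of_not_isMinor_K33plus hG hplus
    ((Function.forall_update_iff X fun _ Z => Z ⊆ A ∪ S).2
      ⟨Set.union_subset_union_left S (hX i₀), fun i _ => Set.subset_union_of_subset_left (hX i) S⟩)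
    fun j => Set.subset_union_of_subset_left (hY j) S
  exact hSA.antisymm (Set.compl_subset_iff_union.2 hcover)

variable {X : Fin 2 → Set V} {r : Fin 3 → V}

lemma IsBipModel.eq_compl_of_isConnector_range (h : IsBipModel G (fun _ _ => True) X Y)
    (hG : G.Connected) (hplus : ¬ IsMinor K33plus G) (hX : ∀ i, X i ⊆ A) (hY : ∀ j, Y j ⊆ A)
    (hr : ∀ j, r j ∈ Y j) (hSA : S ⊆ Aᶜ) (hS : IsConnector G (Set.range r) S) : S = Aᶜ := by
  have hdisj : ∀ {Z : Set V}, Z ⊆ A → Disjoint S Z := fun hZ =>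
    (Set.disjoint_compl_left_iff_subset.2 hZ).mono_left hSA
  have hmodel : IsBipModel G (fun _ _ => True) (Fin.cons S X : Fin 3 → Set V) Y :=
    h.cons hS.1 (fun i => hdisj (hX i)) (fun j => hdisj (hY j)) (fun _ _ => id) fun j _ =>
      (hS.2 (r j) ⟨j, rfl⟩).mono subset_rfl (Set.singleton_subset_iff.2 (hr j))
  have hcover : A ∪ S = Set.univ := hmodel.eq_univ_of_not_isMinor_K33plus hG hplus
    (Fin.cases Set.subset_union_right fun i => Set.subset_union_of_subset_left (hX i) S)
    fun j => Set.subset_union_of_subset_left (hY j) S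
  exact hSA.antisymm (Set.compl_subset_iff_union.2 hcover)

lemma IsBipModel.isMinor_K33h_of_hasRootedTriangle (h : IsBipModel G (fun _ _ => True) X Y)
    (hX : ∀ i, X i ⊆ A) (hY : ∀ j, Y j ⊆ A) (hr : ∀ j, r j ∈ Y j)
    (htri : HasRootedTriangle G Aᶜ r) : IsMinor K33h G := by
  obtain ⟨T, hT, hTr⟩ := htri
  have hdisj : ∀ {Z : Set V}, Z ⊆ A → ∀ i, Disjoint (T i) Z := fun hZ i =>
    (Set.disjoint_compl_left_iff_subset.2 hZ).mono_left (hTr i).1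
  have htY : ∀ j, Touches G (T j) (Y j) := fun j =>
    (hTr j).2.mono subset_rfl (Set.singleton_subset_iff.2 (hr j))
  have hmodel : IsBipModel G (fun i j : Fin 3 => ¬ (i = 0 ∧ (j = 0 ∨ j = 1)))
      (Fin.cons (T 2) X : Fin 3 → Set V) Y := by
    refine h.cons (hT.connected 2) (fun i => hdisj (hX i) 2) (fun j => hdisj (hY j) 2)
      (fun _ _ _ => trivial) fun j hj => ?_
    obtain rfl : j = 2 := by omega
    exact htY 2
  have hlast : ∀ k : Fin 2, Fin.last 2 ≠ k.castSucc := fun k => (Fin.castSucc_lt_last k).ne'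
  exact hmodel.isMinor_K33h (P := fun k => T k.castSucc) (fun k => hT.connected _)
    (hT.disjoint zero_ne_one)
    (Fin.cases (fun k => hT.disjoint (hlast k)) fun i k => (hdisj (hX i) _).symm)
    (fun j k => (hdisj (hY j) _).symm) (hT.touches zero_ne_one) (fun k => hT.touches (hlast k))
    (htY 0).symm (htY 1).symm

end ConnectorsOfModels

/-! ### Induced paths and wheels -/

section Paths

variable {V : Type*} {G H : SimpleGraph V} {C : Set V} {f : ℕ → V} {n : ℕ} {x y z : V}

lemma exists_geodesic (h : H.Reachable x y) : ∃ f : ℕ → V, f 0 = x ∧ f (H.dist x y) = y ∧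
    Set.InjOn f (Set.Iic (H.dist x y)) ∧
      ∀ i j, i < j → j ≤ H.dist x y → (H.Adj (f i) (f j) ↔ j = i + 1) := by
  obtain ⟨p, hp⟩ := h.exists_walk_length_eq_dist
  have hdist : ∀ i ≤ H.dist x y, H.dist x (p.getVert i) = i := fun i hi => by
    rw [← length_eq_dist_of_subwalk hp (p.isSubwalk_take i), p.take_length, hp, min_eq_left hi]
  refine ⟨p.getVert, p.getVert_zero, hp ▸ p.getVert_length, fun i hi j hj hij => ?_,
    fun i j hij hj => ⟨fun hadj => ?_, ?_⟩⟩
  · rw [← hdist i hi, ← hdist j hj, hij]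
  · have hle := dist_le ((p.take i).concat hadj)
    rw [hdist j hj, Walk.length_concat, p.take_length] at hle
    omega
  · rintro rfl
    exact p.adj_getVert_succ (hp ▸ hj)

lemma connected_induce_image_Icc {a b : ℕ} (hab : a ≤ b)
    (h : ∀ i ∈ Set.Ico a b, G.Adj (f i) (f (i + 1))) :
    (G.induce (f '' Set.Icc a b)).Connected := by
  induction b, hab using Nat.le_induction with
  | base =>
    rw [Set.Icc_self, Set.image_singleton]
    exact connected_induce_singleton (f a)
  | succ b hab ih =>
    have hIcc : f '' Set.Icc a (b + 1) = f '' Set.Icc a b ∪ {f (b + 1)} := by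
      rw [← Set.image_singleton, ← Set.image_union, Set.union_singleton]
      exact congrArg _ (Order.Icc_succ_right (by exact hab.trans b.le_succ))
    rw [hIcc]
    exact connected_induce_union_of_touches
      (ih fun i hi => h i (Set.Ico_subset_Ico_right b.le_succ hi)) (connected_induce_singleton _)
      ⟨f b, ⟨b, ⟨hab, le_rfl⟩, rfl⟩, _, rfl, h b ⟨hab, b.lt_succ_self⟩⟩

/-- `f 0, …, f n` is a path of `G` whose vertices span no further edges, except perhaps one between
the ends. -/
structure IsAlmostInducedPath (G : SimpleGraph V) (f : ℕ → V) (n : ℕ) : Prop where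
  injOn : Set.InjOn f (Set.Iic n)
  adj_iff ⦃i j : ℕ⦄ : i < j → j ≤ n → ¬ (i = 0 ∧ j = n) → (G.Adj (f i) (f j) ↔ j = i + 1)

/-- The edges of `G` within `C ∪ {x, y}`, with `xy` left out. -/
def interiorGraph (G : SimpleGraph V) (C : Set V) (x y : V) : SimpleGraph V where
  Adj u w := G.Adj u w ∧ u ∈ insert x (insert y C) ∧ w ∈ insert x (insert y C) ∧ s(u, w) ≠ s(x, y)
  symm := ⟨fun _ _ h => ⟨h.1.symm, h.2.2.1, h.2.1, Sym2.eq_swap ▸ h.2.2.2⟩⟩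
  loopless := ⟨fun _ h => G.irrefl h.1⟩

lemma reachable_interiorGraph (hC : IsConnector G {x, y} C) (hx : x ∉ C) (hy : y ∉ C) :
    (interiorGraph G C x y).Reachable x y := by
  have hadj : ∀ {u w}, u ∈ C → w ∈ insert x (insert y C) → G.Adj u w →
      (interiorGraph G C x y).Adj u w := fun {u w} hu hw huw =>
    ⟨huw, .inr (.inr hu), hw, fun e => by
      obtain ⟨rfl, -⟩ | ⟨rfl, -⟩ := Sym2.eq_iff.1 e
      exacts [hx hu, hy hu]⟩
  obtain ⟨u, hu, hux⟩ := touches_singleton.1 (hC.2 x (by simp))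
  obtain ⟨w, hw, hwy⟩ := touches_singleton.1 (hC.2 y (by simp))
  let φ : G.induce C →g interiorGraph G C x y := ⟨Subtype.val, fun {u w} h =>
    hadj u.2 (.inr (.inr w.2)) h⟩
  exact (hadj hu (by simp) hux).symm.reachable.trans <|
    ((hC.1.preconnected ⟨u, hu⟩ ⟨w, hw⟩).map φ).trans (hadj hw (by simp) hwy).reachable

lemma exists_isAlmostInducedPath (hC : Minimal (IsConnector G {x, y}) C) (hx : x ∉ C)
    (hy : y ∉ C) (hxy : x ≠ y) : ∃ (f : ℕ → V) (n : ℕ), IsAlmostInducedPath G f n ∧ 2 ≤ n ∧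
      f 0 = x ∧ f n = y ∧ f '' Set.Icc 1 (n - 1) = C := by
  obtain ⟨f, h₀, hn, hinj, hadj⟩ := exists_geodesic (reachable_interiorGraph hC.prop hx hy)
  set n := (interiorGraph G C x y).dist x y
  have hn₀ : n ≠ 0 := fun h => hxy (by rw [← h₀, ← hn, h])
  have hn₁ : n ≠ 1 := fun h => ((hadj 0 n (by omega) le_rfl).2 (by omega)).2.2.2 (by rw [h₀, hn])
  have hend : ∀ i ≤ n, f i = x ∨ f i = y → i = 0 ∨ i = n := by
    rintro i hi (h | h)
    · exact .inl (hinj hi (Nat.zero_le n) (h.trans h₀.symm))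
    · exact .inr (hinj hi (Set.mem_Iic.2 le_rfl) (h.trans hn.symm))
  have hmem : ∀ i ≤ n, f i ∈ insert x (insert y C) := fun i hi => by
    obtain rfl | hi₀ := i.eq_zero_or_pos
    · exact .inl h₀
    · exact ((hadj (i - 1) i (by omega) hi).2 (by omega)).2.2.1
  have hstep : ∀ i < n, G.Adj (f i) (f (i + 1)) := fun i hi => ((hadj i _ (by omega) hi).2 rfl).1
  refine ⟨f, n, ⟨hinj, fun i j hij hj hne => ?_⟩, by omega, h₀, hn, ?_⟩
  · refine ⟨fun h => (hadj i j hij hj).1 ⟨h, hmem i (by omega), hmem j hj, fun e => hne ?_⟩,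
      fun h => h ▸ hstep i (by omega)⟩
    have hi : f i ∈ s(x, y) := e ▸ Sym2.mem_mk_left _ _
    have hj' : f j ∈ s(x, y) := e ▸ Sym2.mem_mk_right _ _
    have := hend i (by omega) (Sym2.mem_iff.1 hi)
    have := hend j hj (Sym2.mem_iff.1 hj')
    omega
  · have hsub : f '' Set.Icc 1 (n - 1) ⊆ C := by
      rintro _ ⟨i, ⟨hi₁, hi₂⟩, rfl⟩
      by_contra hiC
      have := hend i (by omega) ((hmem i (by omega)).imp_right fun h => h.resolve_right hiC)
      omega
    refine hsub.antisymm <| hC.le_of_le ⟨connected_induce_image_Icc (by omega) fun i hi =>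
      hstep i (by grind), ?_⟩ hsub
    rintro v (rfl | rfl)
    · exact ⟨f 1, ⟨1, by grind, rfl⟩, f 0, h₀, (hstep 0 (by omega)).symm⟩
    · refine ⟨f (n - 1), ⟨n - 1, by grind, rfl⟩, f n, hn, ?_⟩
      simpa [Nat.sub_add_cancel (show 1 ≤ n by omega)] using hstep (n - 1) (by omega)

lemma IsAlmostInducedPath.neighbor_eq (h : IsAlmostInducedPath G f n) {i j : ℕ} (hi₀ : 0 < i)
    (hin : i < n) (hj : j ≤ n) (hadj : G.Adj (f i) (f j)) : j = i - 1 ∨ j = i + 1 := by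
  obtain hij | rfl | hij := lt_trichotomy i j
  · exact .inr ((h.adj_iff hij hj (by omega)).1 hadj)
  · exact absurd hadj G.irrefl
  · have := (h.adj_iff hij hin.le (by omega)).1 hadj.symm
    omega

lemma IsAlmostInducedPath.adj_of_neighbors_subset (h : IsAlmostInducedPath G f n)
    (hG : KConnected G 3) {i : ℕ} (hi₀ : 0 < i) (hin : i < n)
    (hz : ∀ w, G.Adj (f i) w → w ∈ f '' Set.Iic n ∨ w = z) : G.Adj (f i) z := by
  by_contra hiz
  have hsub : G.neighborSet (f i) ⊆ {f (i - 1), f (i + 1)} := fun w hw => by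
    obtain ⟨j, hj, rfl⟩ | rfl := hz w hw
    · obtain rfl | rfl := h.neighbor_eq hi₀ hin hj hw <;> simp
    · exact absurd hw hiz
  have := hG.le_ncard_neighborSet (f i)
  have := Set.ncard_le_ncard hsub
  have := Set.ncard_insert_le (f (i - 1)) {f (i + 1)}
  have := Set.ncard_singleton (f (i + 1))
  omega

end Paths

section Wheels

variable {V U : Type*} {G : SimpleGraph V} {H : SimpleGraph U} {B T : Set V} {n : ℕ}

lemma wheelGraph_adj_none (i : Fin n) : (wheelGraph n).Adj none (some i) := by
  simp [wheelGraph, fromRel_adj]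

lemma wheelGraph_adj_some_of_lt {i j : Fin n} (hij : i < j) :
    (wheelGraph n).Adj (some i) (some j) ↔ j.1 = i.1 + 1 ∨ i.1 = 0 ∧ j.1 + 1 = n := by
  have hmod : (i.1 + 1) % n = i.1 + 1 := Nat.mod_eq_of_lt (by omega)
  simp only [wheelGraph, fromRel_adj, ne_eq, Option.some.injEq, hij.ne, not_false_eq_true,
    true_and, hmod]
  refine or_congr_right ?_
  obtain hjn | hjn : j.1 + 1 = n ∨ j.1 + 1 < n := by omega
  · simp [hjn]
  · rw [Nat.mod_eq_of_lt hjn]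
    omega

lemma isWheel_of_bijective (hn : 3 ≤ n) {φ : Option (Fin n) → U} (hφ : Function.Bijective φ)
    (hub : ∀ i, H.Adj (φ none) (φ (some i)))
    (rim : ∀ i j, i < j →
      (H.Adj (φ (some i)) (φ (some j)) ↔ j.1 = i.1 + 1 ∨ i.1 = 0 ∧ j.1 + 1 = n)) : IsWheel H := by
  refine ⟨n, hn, ⟨(Iso.symm ⟨Equiv.ofBijective φ hφ, ?_⟩)⟩⟩
  rintro (_ | i) (_ | j)
  · simp
  · exact iff_of_true (hub j) (wheelGraph_adj_none j)
  · exact iff_of_true (hub i).symm (wheelGraph_adj_none i).symm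
  · obtain hij | rfl | hij := lt_trichotomy i j
    · exact (rim i j hij).trans (wheelGraph_adj_some_of_lt hij).symm
    · simp
    · rw [adj_comm, adj_comm (wheelGraph n)]
      exact (rim j i hij).trans (wheelGraph_adj_some_of_lt hij).symm

lemma deltaGraph_adj {a b : B} : (deltaGraph G B T).Adj a b ↔
    a.1 ≠ b.1 ∧ (G.Adj a b ∨ a.1 ∈ T ∧ b.1 ∈ T) := by
  simp only [deltaGraph, fromRel_adj, ne_eq, Subtype.ext_iff, G.adj_comm b, and_comm (a := b.1 ∈ T),
    or_self]

lemma IsAlmostInducedPath.isWheel_deltaGraph {f : ℕ → V} {z : V} (h : IsAlmostInducedPath G f n)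
    (hn : 2 ≤ n) (hz : z ∉ f '' Set.Iic n) (hB : B = insert z (f '' Set.Iic n))
    (hT : T = {z, f 0, f n}) (hub : ∀ i, 0 < i → i < n → G.Adj z (f i)) :
    IsWheel (deltaGraph G B T) := by
  have hfB : ∀ i ≤ n, f i ∈ B := fun i hi => hB ▸ .inr ⟨i, hi, rfl⟩
  have hfz : ∀ i ≤ n, z ≠ f i := fun i hi e => hz ⟨i, hi, e.symm⟩
  have hfT : ∀ i ≤ n, f i ∈ T ↔ i = 0 ∨ i = n := fun i hi => by
    rw [hT, Set.mem_insert_iff, or_iff_right (hfz i hi).symm]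
    exact or_congr (h.injOn.eq_iff hi n.zero_le) (h.injOn.eq_iff hi (Set.mem_Iic.2 le_rfl))
  let φ : Option (Fin (n + 1)) → B := fun o =>
    o.elim ⟨z, hB ▸ .inl rfl⟩ fun i => ⟨f i, hfB i i.is_le⟩
  have hφ : Function.Bijective φ := by
    constructor
    · rintro (_ | i) (_ | j) hij
      · rfl
      · exact absurd (congrArg Subtype.val hij) (hfz j j.is_le)
      · exact absurd (congrArg Subtype.val hij).symm (hfz i i.is_le)
      · exact congrArg some (Fin.ext (h.injOn i.is_le j.is_le (congrArg Subtype.val hij)))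
    · rintro ⟨u, hu⟩
      obtain rfl | ⟨i, hi, rfl⟩ := hB ▸ hu
      · exact ⟨none, rfl⟩
      · exact ⟨some ⟨i, Nat.lt_succ_of_le hi⟩, rfl⟩
  refine isWheel_of_bijective (by omega) hφ (fun i => ?_) fun i j hij => ?_
  · refine deltaGraph_adj.2 ⟨hfz i i.is_le, ?_⟩
    by_cases hi : i.1 = 0 ∨ i.1 = n
    · exact .inr ⟨hT ▸ .inl rfl, (hfT i i.is_le).2 hi⟩
    · exact .inl (hub i (by omega) (by omega))
  · have hne : f i ≠ f j := h.injOn.ne i.is_le j.is_le (Fin.lt_def.1 hij).ne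
    have hadj := h.adj_iff (i := i) (j := j) hij j.is_le
    rw [deltaGraph_adj]
    change f i ≠ f j ∧ (G.Adj (f i) (f j) ∨ f i ∈ T ∧ f j ∈ T) ↔ _
    rw [hfT i i.is_le, hfT j j.is_le]
    grind

lemma IsSep.isWheel_deltaGraph_of_minimal_isConnector {A : Set V} {z : V}
    (h : IsSep G 3 A B) (hG : KConnected G 3) (hz : z ∈ A ∩ B)
    (hmin : Minimal (IsConnector G ((A ∩ B) \ {z})) Aᶜ) : IsWheel (deltaGraph G B (A ∩ B)) := by
  have hcard : ((A ∩ B) \ {z}).ncard = 2 := by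
    rw [Set.ncard_sdiff_singleton_of_mem hz, h.2.2.2.1]
  obtain ⟨x, y, hxy, hpair⟩ := Set.ncard_eq_two.1 hcard
  have hAB : A ∩ B = {z, x, y} := by rw [← hpair, Set.insert_sdiff_self_of_mem hz]
  have hx : x ∈ (A ∩ B) \ {z} := hpair ▸ .inl rfl
  have hy : y ∈ (A ∩ B) \ {z} := hpair ▸ .inr rfl
  rw [hpair] at hmin
  obtain ⟨f, n, hf, hn, rfl, rfl, himage⟩ :=
    exists_isAlmostInducedPath hmin (fun hxA => hxA hx.1.1) (fun hyA => hyA hy.1.1) hxy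
  have hpath : f '' Set.Iic n = insert (f 0) (insert (f n) Aᶜ) := by
    rw [← himage, ← Set.image_insert_eq, ← Set.image_insert_eq]
    congr 1
    ext i
    simp only [Set.mem_Iic, Set.mem_insert_iff, Set.mem_Icc]
    omega
  have hB : B = insert z (f '' Set.Iic n) := by
    have hunion : B = (A ∩ B) ∪ Aᶜ := by
      rw [Set.inter_union_distrib_right, Set.union_compl_self, Set.univ_inter, Set.union_comm]
      exact (Set.union_eq_self_of_subset_left fun u hu => h.mem_right hu).symm
    rw [hpath, hunion, hAB]
    simp only [Set.insert_union, Set.singleton_union]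
  refine hf.isWheel_deltaGraph hn ?_ hB hAB fun i hi₀ hin => (hf.adj_of_neighbors_subset hG hi₀ hin
    fun w hw => ?_).symm
  · rw [hpath]
    rintro (rfl | rfl | hzA)
    exacts [hx.2 rfl, hy.2 rfl, hzA hz.1]
  · have hiA : f i ∈ Aᶜ := himage ▸ ⟨i, ⟨hi₀, by omega⟩, rfl⟩
    exact (hB ▸ h.mem_right_of_adj hiA hw : w ∈ insert z (f '' Set.Iic n)).symm

end Wheels

/-! ### The side complementary to a nonplanar one -/

section Conclusion

variable {V : Type*} [Finite V] {G : SimpleGraph V} {A B : Set V}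

lemma IsSep.exists_minimal_isConnector_of_missing_edge {X Y : Fin 3 → Set V} {i₀ j₀ : Fin 3}
    {s t : V} (h : IsSep G 3 A B) (hG : KConnected G 3) (hplus : ¬ IsMinor K33plus G)
    (hmodel : IsBipModel G (fun i j => ¬ (i = i₀ ∧ j = j₀)) X Y) (hX : ∀ i, X i ⊆ A)
    (hY : ∀ j, Y j ⊆ A) (hs : s ∈ X i₀) (hsAB : s ∈ A ∩ B) (ht : t ∈ Y j₀) (htAB : t ∈ A ∩ B) :
    ∃ z ∈ A ∩ B, Minimal (IsConnector G ((A ∩ B) \ {z})) Aᶜ := by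
  have hst : s ≠ t := fun e => Set.disjoint_left.1 (hmodel.disjoint i₀ j₀) hs (e ▸ ht)
  have hsub : {s, t} ⊆ A ∩ B := Set.insert_subset hsAB (Set.singleton_subset_iff.2 htAB)
  obtain ⟨z, hz⟩ : ∃ z, (A ∩ B) \ {s, t} = {z} := by
    rw [← Set.ncard_eq_one, Set.ncard_sdiff hsub, h.2.2.2.1, Set.ncard_pair hst]
  have hzAB : z ∈ A ∩ B := (hz.symm ▸ Set.mem_singleton z : z ∈ (A ∩ B) \ {s, t}).1
  refine ⟨z, hzAB, ?_⟩
  rw [← hz, Set.sdiff_sdiff_cancel_left hsub]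
  exact h.minimal_isConnector hG hsub fun _ hSA hS =>
    hmodel.eq_compl_of_isConnector_pair (hG.connected three_pos) hplus hX hY hs ht hSA hS

lemma IsSep.exists_minimal_isConnector_of_roots {X : Fin 2 → Set V} {Y : Fin 3 → Set V}
    {r : Fin 3 → V} (h : IsSep G 3 A B) (hG : KConnected G 3) (hplus : ¬ IsMinor K33plus G)
    (hK33h : ¬ IsMinor K33h G) (hmodel : IsBipModel G (fun _ _ => True) X Y)
    (hX : ∀ i, X i ⊆ A) (hY : ∀ j, Y j ⊆ A) (hr : ∀ j, r j ∈ Y j) (hrAB : ∀ j, r j ∈ A ∩ B) :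
    ∃ z ∈ A ∩ B, Minimal (IsConnector G ((A ∩ B) \ {z})) Aᶜ := by
  have hinj : Function.Injective r := fun i j hij => by
    by_contra hne
    exact Set.disjoint_left.1 (hmodel.disjoint_right hne) (hr i) (hij ▸ hr j)
  have hrange : Set.range r = A ∩ B := by
    refine Set.eq_of_subset_of_ncard_le (Set.range_subset_iff.2 hrAB) ?_
    rw [h.2.2.2.1, ← Set.image_univ, Set.ncard_image_of_injective _ hinj, Set.ncard_univ,
      Nat.card_fin]
  refine h.exists_minimal_isConnector_diff hG hinj hrange ?_ fun htri =>
    hK33h (hmodel.isMinor_K33h_of_hasRootedTriangle hX hY hr htri)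
  exact h.minimal_isConnector hG subset_rfl fun _ hSA hS =>
    hmodel.eq_compl_of_isConnector_range (hG.connected three_pos) hplus hX hY hr hSA (hrange ▸ hS)

lemma IsSep.exists_minimal_isConnector_of_k33Cases (h : IsSep G 3 A B) (hG : KConnected G 3)
    (hplus : ¬ IsMinor K33plus G) (hK33h : ¬ IsMinor K33h G) (hY : K33Cases (sepY G A B) none) :
    ∃ z ∈ A ∩ B, Minimal (IsConnector G ((A ∩ B) \ {z})) Aᶜ := by
  obtain ⟨X, Y, hmodel, hnone⟩ | ⟨i₀, j₀, X, Y, hmodel, hnone, hX, hY⟩ |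
    ⟨X, Y, hmodel, hnone, hY⟩ := hY
  · exact absurd ((hmodel.underlying hnone).eq_univ_of_not_isMinor_K33plus
      (hG.connected three_pos) hplus (fun i => underlying_subset _) fun j => underlying_subset _)
      h.2.1
  · obtain ⟨s, hs, hsAB⟩ := exists_mem_underlying_of_touches hX
    obtain ⟨t, ht, htAB⟩ := exists_mem_underlying_of_touches hY
    exact h.exists_minimal_isConnector_of_missing_edge hG hplus (hmodel.underlying hnone)
      (fun i => underlying_subset _) (fun j => underlying_subset _) hs hsAB ht htAB
  · choose r hr hrAB using fun j => exists_mem_underlying_of_touches (hY j)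
    exact h.exists_minimal_isConnector_of_roots hG hplus hK33h (hmodel.underlying hnone)
      (fun i => underlying_subset _) (fun j => underlying_subset _) hr hrAB

end Conclusion

/-- If `G` is 3-connected and {K33+, K33h}-free and `{G[A], G[B]}` is a 3-separation
with `G[A]^Y` nonplanar, then `G[B]^Δ` is a wheel. -/
theorem stmt8 {V : Type} [Fintype V] (G : SimpleGraph V) (h3 : KConnected G 3)
    (hfree : ¬ IsMinor K33plus G ∧ ¬ IsMinor K33h G)
    (A B : Set V) (hsep : IsSep G 3 A B) (hY : ¬ Planar (sepY G A B)) :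
    IsWheel (deltaGraph G B (A ∩ B)) := by
  obtain ⟨z, hz, hmin⟩ := hsep.exists_minimal_isConnector_of_k33Cases h3 hfree.1 hfree.2
    ((hsep.isMinor_K33_of_not_planar_sepY h3 hY).k33Cases none)
  exact hsep.isWheel_deltaGraph_of_minimal_isConnector h3 hz hmin
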